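/- arXiv:1011.4492 — 2 statements merged into one kernel-verified Lean document; each statement's English description precedes it below -/
import Mathlib

section
/- Let χ be a non-principal Dirichlet character modulo an integer m ≥ 10^{15}, and let q_1 < q_2 be the two smallest prime non-residues of χ. Then q_2 < 2·m^{1/2}·log m. -/
/-!
Let `r` be a prime, let `N = m r`, and regard `χ` as a character modulo `N`, of conductor `f`. If
every prime `q ≠ r` below `2h` satisfies `χ q ∈ {0, 1}`, then on `[1, 2h)` the character is the
indicator function of the integers coprime to `N`, so sieving by the divisors of `N` gives
`∑_{a, b < h} χ (a + b + 1) ≥ h (h φ(N) / N - 2 ^ ω(N))`. On the Fourier side the double sum turns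
the kernel `∑_{a < h} e(a k / N)` into its square, whose absolute value Parseval sums to at most
`N h`. Hence the Pólya–Vinogradov inequality holds here without its logarithm: the same sum is at
most `2 ^ ω(N / f) h √f`. Since `φ(N) / N` is at least of order `ω(N) ^ (-1/2)`, the two bounds are
incompatible for `h = ⌊√m log m⌋` and `m ≥ 10 ^ 15`.
-/

open Finset
open scoped ArithmeticFunction.Moebius

section Fourier

open ZMod

variable {N : ℕ} [NeZero N]

lemma sum_stdAddChar_mul_dft (Φ : ZMod N → ℂ) (x : ZMod N) :
    ∑ k, stdAddChar (k * x) * 𝓕 Φ k = N * Φ x := by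
  have hinv : (N : ℂ)⁻¹ * ∑ k, stdAddChar (k * x) * 𝓕 Φ k = Φ x := by
    simpa only [invDFT_apply, smul_eq_mul] using congrFun (dft.symm_apply_apply Φ) x
  rw [← hinv, mul_inv_cancel_left₀ (NeZero.ne (N : ℂ))]

lemma sum_norm_sq_dft (Φ : ZMod N → ℂ) :
    ∑ k, ‖𝓕 Φ k‖ ^ 2 = N * ∑ x, ‖Φ x‖ ^ 2 := by
  have hconj (k : ZMod N) :
      starRingEnd ℂ (𝓕 Φ k) = ∑ x, stdAddChar (k * x) * starRingEnd ℂ (Φ x) := by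
    simp only [dft_apply, smul_eq_mul, map_sum, map_mul, ← AddChar.map_neg_eq_conj, neg_neg,
      mul_comm k]
  have hcomplex : ∑ k, 𝓕 Φ k * starRingEnd ℂ (𝓕 Φ k) = N * ∑ x, Φ x * starRingEnd ℂ (Φ x) := by
    simp only [hconj, mul_sum]
    rw [sum_comm]
    refine sum_congr rfl fun x _ => ?_
    rw [← mul_assoc, ← sum_stdAddChar_mul_dft, sum_mul]
    exact sum_congr rfl fun k _ => by ring
  simp only [Complex.mul_conj'] at hcomplex
  exact_mod_cast hcomplex

lemma sum_filter_val_lt {M : Type*} [AddCommMonoid M] (F : ZMod N → M) {t : ℕ} (ht : t ≤ N) :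
    ∑ x with x.val < t, F x = ∑ a ∈ range t, F a := by
  refine sum_nbij' val (fun a => (a : ZMod N)) (by simp) (fun a ha => ?_) (by simp)
    (fun a ha => ?_) (by simp)
  all_goals have hval := val_cast_of_lt ((mem_range.1 ha).trans_le ht)
  · simpa [hval] using ha
  · exact hval

lemma dft_ite_val_lt {t : ℕ} (ht : t ≤ N) (k : ZMod N) :
    𝓕 (fun x : ZMod N => if x.val < t then (1 : ℂ) else 0) k
      = ∑ a ∈ range t, stdAddChar (-k) ^ a := by
  simp only [dft_apply, smul_eq_mul, mul_ite, mul_one, mul_zero, ← sum_filter,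
    sum_filter_val_lt _ ht, ← AddChar.map_nsmul_eq_pow, nsmul_eq_mul, mul_neg]

lemma sum_norm_sq_geom_sum_stdAddChar {t : ℕ} (ht : t ≤ N) :
    ∑ k : ZMod N, ‖∑ a ∈ range t, stdAddChar k ^ a‖ ^ 2 = N * t := by
  have hdft := sum_norm_sq_dft fun x : ZMod N => if x.val < t then (1 : ℂ) else 0
  simp only [dft_ite_val_lt ht] at hdft
  rw [← Equiv.sum_comp (Equiv.neg (ZMod N))]
  simpa only [Equiv.neg_apply, apply_ite norm, norm_one, norm_zero, ite_pow, one_pow,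
    zero_pow two_ne_zero, ← sum_filter, sum_filter_val_lt _ ht, sum_const, card_range,
    nsmul_eq_mul, mul_one] using hdft

lemma sum_norm_sq_geom_sum_stdAddChar_le (h : ℕ) :
    ∑ k ∈ univ.erase (0 : ZMod N), ‖∑ a ∈ range h, stdAddChar k ^ a‖ ^ 2 ≤ N * h := by
  have hmod (k : ZMod N) (hk : k ∈ univ.erase 0) :
      ∑ a ∈ range h, stdAddChar k ^ a = ∑ a ∈ range (h % N), stdAddChar k ^ a := by
    have hne : stdAddChar k ≠ 1 := fun h1 =>
      (mem_erase.1 hk).1 (injective_stdAddChar (h1.trans (AddChar.map_zero_eq_one _).symm))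
    have hpow : stdAddChar k ^ N = 1 := by
      rw [← AddChar.map_nsmul_eq_pow, nsmul_eq_mul, natCast_self, zero_mul,
        AddChar.map_zero_eq_one]
    rw [geom_sum_eq hne, geom_sum_eq hne, pow_eq_pow_mod h hpow]
  have hlt : h % N ≤ N := (Nat.mod_lt h (NeZero.pos N)).le
  calc ∑ k ∈ univ.erase (0 : ZMod N), ‖∑ a ∈ range h, stdAddChar k ^ a‖ ^ 2
      = ∑ k ∈ univ.erase (0 : ZMod N), ‖∑ a ∈ range (h % N), stdAddChar k ^ a‖ ^ 2 :=
        sum_congr rfl fun k hk => by rw [hmod k hk]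
    _ ≤ ∑ k : ZMod N, ‖∑ a ∈ range (h % N), stdAddChar k ^ a‖ ^ 2 :=
        sum_le_sum_of_subset_of_nonneg (erase_subset _ _) fun _ _ _ => by positivity
    _ = N * (h % N : ℕ) := sum_norm_sq_geom_sum_stdAddChar hlt
    _ ≤ N * h := by gcongr; exact Nat.mod_le h N

lemma norm_sum_sum_add_le_of_norm_dft_le {Φ : ZMod N → ℂ} {C : ℝ} (hΦ₀ : 𝓕 Φ 0 = 0)
    (hΦ : ∀ k, ‖𝓕 Φ k‖ ≤ C) (h : ℕ) (c : ZMod N) :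
    ‖∑ a ∈ range h, ∑ b ∈ range h, Φ (a + b + c)‖ ≤ C * h := by
  have hinv : N * ∑ a ∈ range h, ∑ b ∈ range h, Φ (a + b + c)
      = ∑ k ∈ univ.erase (0 : ZMod N),
          stdAddChar (k * c) * 𝓕 Φ k * (∑ a ∈ range h, stdAddChar k ^ a) ^ 2 := by
    rw [sum_erase _ (by rw [hΦ₀]; ring)]
    simp only [mul_sum, ← sum_stdAddChar_mul_dft, sq, sum_mul]
    simp only [sum_comm (s := range h) (t := univ)]
    refine sum_congr rfl fun k _ => sum_congr rfl fun a _ => sum_congr rfl fun b _ => ?_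
    rw [← AddChar.map_nsmul_eq_pow, ← AddChar.map_nsmul_eq_pow, mul_add, mul_add,
      AddChar.map_add_eq_mul, AddChar.map_add_eq_mul, nsmul_eq_mul, nsmul_eq_mul, mul_comm k,
      mul_comm k]
    ring
  have hC : 0 ≤ C := (norm_nonneg _).trans (hΦ 0)
  have hN : (0 : ℝ) < N := Nat.cast_pos.2 (NeZero.pos N)
  refine le_of_mul_le_mul_left ?_ hN
  calc N * ‖∑ a ∈ range h, ∑ b ∈ range h, Φ (a + b + c)‖
      = ‖∑ k ∈ univ.erase (0 : ZMod N),
          stdAddChar (k * c) * 𝓕 Φ k * (∑ a ∈ range h, stdAddChar k ^ a) ^ 2‖ := by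
        rw [← hinv, norm_mul, Complex.norm_natCast]
    _ ≤ ∑ k ∈ univ.erase (0 : ZMod N), C * ‖∑ a ∈ range h, stdAddChar k ^ a‖ ^ 2 := by
        refine norm_sum_le_of_le _ fun k _ => ?_
        rw [norm_mul, norm_mul, norm_pow, AddChar.norm_apply, one_mul]
        gcongr
        exact hΦ k
    _ ≤ N * (C * h) := by
        rw [← mul_sum, mul_left_comm]
        gcongr
        exact sum_norm_sq_geom_sum_stdAddChar_le h

lemma stdAddChar_natCast (j : ℕ) :
    stdAddChar (j : ZMod N) = Complex.exp (2 * Real.pi * Complex.I * j / N) := by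
  simpa using stdAddChar_coe (N := N) j

lemma stdAddChar_mul_natCast (f d j : ℕ) [NeZero f] [NeZero d] :
    stdAddChar (((d * j : ℕ) : ZMod (f * d))) = stdAddChar (j : ZMod f) := by
  have hd : (d : ℂ) ≠ 0 := NeZero.ne _
  rw [stdAddChar_natCast, stdAddChar_natCast]
  congr 1
  push_cast
  field_simp

lemma dft_ite_dvd_val {f d : ℕ} [NeZero f] [NeZero d] (Φ : ZMod f → ℂ) (k : ℕ) :
    𝓕 (fun x : ZMod (f * d) => if d ∣ x.val then Φ x.val else 0) k
      = 𝓕 (fun y : ZMod f => Φ (d * y)) k := by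
  have hd := NeZero.pos d
  have hval (y : ZMod f) : ((d * y.val : ℕ) : ZMod (f * d)).val = d * y.val :=
    val_cast_of_lt <| (Nat.mul_lt_mul_of_pos_left y.val_lt hd).trans_eq (mul_comm d f)
  simp only [dft_apply, smul_eq_mul, mul_ite, mul_zero, ← sum_filter]
  symm
  refine sum_bij' (fun y _ => ((d * y.val : ℕ) : ZMod (f * d)))
    (fun x _ => ((x.val / d : ℕ) : ZMod f)) ?_ ?_ ?_ ?_ ?_
  · intro y _
    rw [mem_filter, hval]
    exact ⟨mem_univ _, dvd_mul_right _ _⟩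
  · simp
  · intro y _
    rw [hval, Nat.mul_div_cancel_left _ hd, natCast_zmod_val]
  · intro x hx
    have hlt : x.val / d < f := Nat.div_lt_of_lt_mul (x.val_lt.trans_eq (mul_comm f d))
    rw [val_cast_of_lt hlt, Nat.mul_div_cancel' (mem_filter.1 hx).2, natCast_zmod_val]
  · intro y _
    have hchar :
        stdAddChar (((d * y.val : ℕ) : ZMod (f * d)) * (k : ZMod (f * d)))
          = stdAddChar (y * (k : ZMod f)) := by
      rw [← Nat.cast_mul, mul_assoc, stdAddChar_mul_natCast, Nat.cast_mul, natCast_zmod_val]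
    rw [hval, AddChar.map_neg_eq_inv, AddChar.map_neg_eq_inv, hchar, Nat.cast_mul,
      natCast_zmod_val]

lemma norm_dft_le_sqrt_of_isPrimitive {χ : DirichletCharacter ℂ N} (hχ : χ.IsPrimitive)
    (k : ZMod N) : ‖𝓕 χ k‖ ≤ √N := by
  have hnorm (k : ZMod N) : ‖𝓕 χ k‖ = ‖χ (-k)‖ * ‖gaussSum χ stdAddChar‖ := by
    rw [hχ.fourierTransform_eq_inv_mul_gaussSum, ← MulChar.star_apply', norm_mul, norm_star]
  have hpos : 0 < ∑ x, ‖χ x‖ ^ 2 :=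
    sum_pos' (fun _ _ => by positivity) ⟨1, mem_univ _, by simp⟩
  have hgauss : ‖gaussSum χ stdAddChar‖ ^ 2 = N := by
    refine mul_left_cancel₀ hpos.ne' ?_
    rw [mul_comm _ (N : ℝ), ← sum_norm_sq_dft, ← Equiv.sum_comp (Equiv.neg (ZMod N)), sum_mul]
    simp only [hnorm, mul_pow, Equiv.neg_apply]
  rw [hnorm, ← hgauss, Real.sqrt_sq (norm_nonneg _)]
  exact mul_le_of_le_one_left (norm_nonneg _) (χ.norm_le_one _)

lemma norm_sum_sum_ite_dvd_le {f d : ℕ} [NeZero f] [NeZero d] {ψ : DirichletCharacter ℂ f}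
    (hψ : ψ.IsPrimitive) (hψ₁ : ψ ≠ 1) (h : ℕ) :
    ‖∑ a ∈ range h, ∑ b ∈ range h, if d ∣ a + b + 1 then ψ ((a + b + 1 : ℕ) : ZMod f) else 0‖
      ≤ √f * h := by
  set Φ : ZMod (f * d) → ℂ := fun x => if d ∣ x.val then ψ x.val else 0
  have hdft (k : ℕ) : 𝓕 Φ k = ψ d * 𝓕 ψ (k : ZMod f) := by
    rw [dft_ite_dvd_val]
    simp only [map_mul, dft_const_mul]
  have hΦ (k : ZMod (f * d)) : ‖𝓕 Φ k‖ ≤ √f := by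
    rw [← natCast_zmod_val k, hdft, norm_mul]
    exact (mul_le_of_le_one_left (norm_nonneg _) (ψ.norm_le_one _)).trans
      (norm_dft_le_sqrt_of_isPrimitive hψ _)
  have hΦ₀ : 𝓕 Φ 0 = 0 := by
    rw [← Nat.cast_zero, hdft, Nat.cast_zero, dft_apply_zero, MulChar.sum_eq_zero_of_ne_one hψ₁,
      mul_zero]
  have happly (n : ℕ) : Φ n = if d ∣ n then ψ n else 0 := by
    have hf : ((n % (f * d) : ℕ) : ZMod f) = n :=
      (natCast_eq_natCast_iff _ _ _).2 ((Nat.mod_modEq n _).of_mul_right d)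
    simp only [Φ, val_natCast, Nat.dvd_mod_iff (dvd_mul_left d f), hf]
  simp only [← happly]
  push_cast
  exact norm_sum_sum_add_le_of_norm_dft_le hΦ₀ hΦ h 1

end Fourier

section Sieve

variable {Q : ℕ}

lemma sum_divisors_moebius_ite_dvd (hQ : Q ≠ 0) (n : ℕ) :
    ∑ d ∈ Q.divisors, (if d ∣ n then μ d else 0) = if n.Coprime Q then 1 else 0 := by
  have hfilter : {d ∈ Q.divisors | d ∣ n} = (n.gcd Q).divisors := by
    rw [← Nat.divisors_filter_dvd_of_dvd hQ (Nat.gcd_dvd_right n Q)]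
    refine filter_congr fun d hd => ?_
    rw [Nat.dvd_gcd_iff, and_iff_left (Nat.dvd_of_mem_divisors hd)]
  rw [← sum_filter, hfilter, ← ArithmeticFunction.coe_mul_zeta_apply,
    ArithmeticFunction.moebius_mul_coe_zeta, ArithmeticFunction.one_apply]

lemma sum_divisors_abs_moebius (hQ : Q ≠ 0) :
    ∑ d ∈ Q.divisors, |μ d| = 2 ^ #Q.primeFactors := by
  simp only [ArithmeticFunction.abs_moebius, ← sum_filter]
  rw [Nat.sum_divisors_filter_squarefree hQ]
  simp [card_powerset, UniqueFactorizationMonoid.primeFactors_eq_natPrimeFactors]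

lemma sum_divisors_moebius_div (hQ : Q ≠ 0) :
    ∑ d ∈ Q.divisors, (μ d : ℝ) / d = Q.totient / Q := by
  have hinv := (ArithmeticFunction.sum_eq_iff_sum_mul_moebius_eq (R := ℝ)
    (f := fun n => (n.totient : ℝ)) (g := fun n => n)).1
    (fun n _ => by exact_mod_cast Nat.sum_totient n) Q hQ.bot_lt
  rw [← hinv, sum_div, Nat.sum_divisorsAntidiagonal fun d e => (μ d : ℝ) * (e : ℕ) / Q]
  refine sum_congr rfl fun d hd => ?_
  have hd₀ : (d : ℝ) ≠ 0 := Nat.cast_ne_zero.2 (Nat.pos_of_mem_divisors hd).ne'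
  rw [Nat.cast_div (Nat.dvd_of_mem_divisors hd) hd₀]
  field_simp

lemma abs_sum_ite_dvd_sub_div_le (d a h : ℕ) :
    |∑ b ∈ range h, (if d ∣ a + b + 1 then 1 else 0) - (h / d : ℝ)| ≤ 1 := by
  have hcount : ∑ b ∈ range h, (if d ∣ a + b + 1 then (1 : ℝ) else 0)
      = ((a + h) / d : ℕ) - (a / d : ℕ) := by
    refine Eq.trans ?_ (sum_range_sub (fun b => (((a + b) / d : ℕ) : ℝ)) h)
    refine sum_congr rfl fun b _ => ?_
    rw [← add_assoc, Nat.succ_div]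
    push_cast
    ring
  have hfloor (n : ℕ) : (n / d : ℝ) - 1 < (n / d : ℕ) ∧ ((n / d : ℕ) : ℝ) ≤ n / d := by
    rw [← Nat.floor_div_eq_div (K := ℝ)]
    exact ⟨Nat.sub_one_lt_floor _, Nat.floor_le (by positivity)⟩
  have hadd : ((a + h : ℕ) / d : ℝ) = a / d + h / d := by push_cast; ring
  rw [hcount, abs_le]
  constructor <;> linarith [hfloor a, hfloor (a + h)]

lemma mul_totient_div_sub_le_sum_ite_coprime (hQ : Q ≠ 0) (a h : ℕ) :
    h * (Q.totient / Q : ℝ) - 2 ^ #Q.primeFactors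
      ≤ ∑ b ∈ range h, if (a + b + 1).Coprime Q then (1 : ℝ) else 0 := by
  have hsieve : ∑ b ∈ range h, (if (a + b + 1).Coprime Q then (1 : ℝ) else 0)
      = ∑ d ∈ Q.divisors, μ d * ∑ b ∈ range h, if d ∣ a + b + 1 then (1 : ℝ) else 0 := by
    simp only [mul_sum, mul_ite, mul_one, mul_zero]
    rw [sum_comm]
    refine sum_congr rfl fun b _ => ?_
    exact_mod_cast (sum_divisors_moebius_ite_dvd hQ (a + b + 1)).symm
  have hmain : h * (Q.totient / Q : ℝ) = ∑ d ∈ Q.divisors, (μ d : ℝ) * (h / d) := by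
    rw [← sum_divisors_moebius_div hQ, mul_sum]
    exact sum_congr rfl fun d _ => by ring
  have hμ : (2 : ℝ) ^ #Q.primeFactors = ∑ d ∈ Q.divisors, |(μ d : ℝ)| := by
    exact_mod_cast (sum_divisors_abs_moebius hQ).symm
  rw [hsieve, hmain, hμ, sub_le_comm, ← sum_sub_distrib]
  refine sum_le_sum fun d _ => ?_
  rw [← mul_sub]
  refine (le_abs_self _).trans ?_
  rw [abs_mul, abs_sub_comm]
  exact mul_le_of_le_one_right (abs_nonneg _) (abs_sum_ite_dvd_sub_div_le d a h)

end Sieve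

section Character

variable {N : ℕ} {χ : DirichletCharacter ℂ N}

lemma apply_natCast_eq_ite_primitiveCharacter (χ : DirichletCharacter ℂ N) (n : ℕ) :
    χ n = if n.Coprime (N / χ.conductor) then χ.primitiveCharacter n else 0 := by
  have hN : n.Coprime N ↔ n.Coprime χ.conductor ∧ n.Coprime (N / χ.conductor) := by
    rw [← Nat.coprime_mul_iff_right, Nat.mul_div_cancel' χ.conductor_dvd_level]
  by_cases hn : n.Coprime N
  · rw [if_pos (hN.1 hn).2]
    simpa using (χ.primitiveCharacter_apply_of_isCoprime
      (a := n) (Nat.isCoprime_iff_coprime.2 hn)).symm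
  · rw [χ.map_nonunit fun hu => hn ((ZMod.isUnit_iff_coprime n N).1 hu)]
    split_ifs with hQ
    · refine (χ.primitiveCharacter.map_nonunit fun hu => hn (hN.2 ⟨?_, hQ⟩)).symm
      exact (ZMod.isUnit_iff_coprime n _).1 hu
    · rfl

lemma apply_natCast_eq_one_of_forall_prime {n : ℕ} (hn : n ≠ 0)
    (hχ : ∀ p, p.Prime → p ∣ n → χ p = 1) : χ n = 1 := by
  induction n using Nat.recOnMul with
  | zero => exact absurd rfl hn
  | one => simp
  | prime p hp => exact hχ p hp dvd_rfl
  | mul a b iha ihb =>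
    rw [Nat.cast_mul, map_mul, iha (left_ne_zero_of_mul hn) fun p hp h => hχ p hp (h.mul_right b),
      ihb (right_ne_zero_of_mul hn) fun p hp h => hχ p hp (h.mul_left a), one_mul]

lemma apply_natCast_eq_ite_coprime_of_forall_prime_lt {M : ℕ}
    (hres : ∀ q : ℕ, q.Prime → q < M → χ q ∈ ({0, 1} : Set ℂ)) {n : ℕ} (hn : n ≠ 0)
    (hnM : n < M) : χ n = if n.Coprime N then 1 else 0 := by
  split_ifs with hcop
  · refine apply_natCast_eq_one_of_forall_prime hn fun p hp hpn => ?_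
    have hunit : IsUnit (p : ZMod N) := (ZMod.isUnit_iff_coprime p N).2 (hcop.coprime_dvd_left hpn)
    exact (hres p hp ((Nat.le_of_dvd hn.bot_lt hpn).trans_lt hnM)).resolve_left
      (hunit.map χ).ne_zero
  · exact χ.map_nonunit fun hu => hcop ((ZMod.isUnit_iff_coprime n N).1 hu)

lemma changeLevel_apply_natCast_mem {m r q : ℕ} {χ : DirichletCharacter ℂ m}
    (hq : q.Prime) (hχq : q ≠ r → χ q ∈ ({0, 1} : Set ℂ)) :
    DirichletCharacter.changeLevel (dvd_mul_right m r) χ q ∈ ({0, 1} : Set ℂ) := by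
  by_cases hcop : q.Coprime (m * r)
  · have hqr : q ≠ r := fun h => hq.ne_one <| hcop.eq_one_of_dvd (h ▸ dvd_mul_left r m)
    have hchange := χ.changeLevel_eq_cast_of_dvd' (dvd_mul_right m r) (a := q)
      (Nat.isCoprime_iff_coprime.2 hcop)
    rw [Int.cast_natCast, Int.cast_natCast] at hchange
    rw [hchange]
    exact hχq hqr
  · exact .inl (MulChar.map_nonunit _ fun hu => hcop ((ZMod.isUnit_iff_coprime q _).1 hu))

variable [NeZero N]

lemma norm_sum_sum_apply_add_le (hχ : χ ≠ 1) (h : ℕ) :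
    ‖∑ a ∈ range h, ∑ b ∈ range h, χ ((a + b + 1 : ℕ) : ZMod N)‖
      ≤ 2 ^ #(N / χ.conductor).primeFactors * (√χ.conductor * h) := by
  have hf : NeZero χ.conductor := ⟨χ.conductor_ne_zero⟩
  have hQ : N / χ.conductor ≠ 0 :=
    (Nat.div_pos (Nat.le_of_dvd (NeZero.pos N) χ.conductor_dvd_level) (NeZero.pos _)).ne'
  have hψ : χ.primitiveCharacter ≠ 1 := fun h1 => hχ <| by
    rw [← χ.changeLevel_primitiveCharacter, h1, DirichletCharacter.changeLevel_one]
  have hsieve (n : ℕ) : χ n = ∑ d ∈ (N / χ.conductor).divisors,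
      (μ d : ℂ) * if d ∣ n then χ.primitiveCharacter n else 0 := by
    have hind := congrArg ((↑) : ℤ → ℂ) (sum_divisors_moebius_ite_dvd hQ n)
    push_cast at hind
    rw [apply_natCast_eq_ite_primitiveCharacter, ← one_mul (χ.primitiveCharacter _),
      ← zero_mul (χ.primitiveCharacter _), ← ite_mul, ← hind, sum_mul]
    exact sum_congr rfl fun d _ => by split_ifs <;> ring
  calc ‖∑ a ∈ range h, ∑ b ∈ range h, χ ((a + b + 1 : ℕ) : ZMod N)‖
      = ‖∑ d ∈ (N / χ.conductor).divisors, μ d * ∑ a ∈ range h, ∑ b ∈ range h,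
          if d ∣ a + b + 1 then χ.primitiveCharacter ((a + b + 1 : ℕ) : ZMod χ.conductor)
          else 0‖ := by
        simp only [hsieve, mul_sum, sum_comm (s := range h) (t := (N / χ.conductor).divisors)]
    _ ≤ ∑ d ∈ (N / χ.conductor).divisors, |(μ d : ℝ)| * (√χ.conductor * h) := by
        refine norm_sum_le_of_le _ fun d hd => ?_
        have hd : NeZero d := ⟨(Nat.pos_of_mem_divisors hd).ne'⟩
        rw [norm_mul, Complex.norm_intCast]
        gcongr
        exact norm_sum_sum_ite_dvd_le χ.primitiveCharacter_isPrimitive hψ h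
    _ = 2 ^ #(N / χ.conductor).primeFactors * (√χ.conductor * h) := by
        rw [← sum_mul]
        congr 1
        exact_mod_cast sum_divisors_abs_moebius hQ

lemma mul_totient_div_le_of_forall_prime_lt (hχ : χ ≠ 1) {h : ℕ} (hh : h ≠ 0)
    (hres : ∀ q : ℕ, q.Prime → q < 2 * h → χ q ∈ ({0, 1} : Set ℂ)) :
    h * (N.totient / N : ℝ)
      ≤ 2 ^ #N.primeFactors + 2 ^ #(N / χ.conductor).primeFactors * √χ.conductor := by
  have hsum : ∑ a ∈ range h, ∑ b ∈ range h, χ ((a + b + 1 : ℕ) : ZMod N)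
      = (∑ a ∈ range h, ∑ b ∈ range h, if (a + b + 1).Coprime N then (1 : ℝ) else 0 : ℝ) := by
    push_cast
    refine sum_congr rfl fun a ha => sum_congr rfl fun b hb => ?_
    rw [mem_range] at ha hb
    exact_mod_cast apply_natCast_eq_ite_coprime_of_forall_prime_lt hres (by lia)
      (by lia : a + b + 1 < 2 * h)
  have hlower : h * (h * (N.totient / N : ℝ) - 2 ^ #N.primeFactors)
      ≤ ∑ a ∈ range h, ∑ b ∈ range h, if (a + b + 1).Coprime N then (1 : ℝ) else 0 := by
    simpa using card_nsmul_le_sum (range h) _ _ fun a _ =>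
      mul_totient_div_sub_le_sum_ite_coprime (NeZero.ne N) a h
  have hupper := norm_sum_sum_apply_add_le hχ h
  rw [hsum, Complex.norm_real, Real.norm_eq_abs] at hupper
  rw [← sub_le_iff_le_add']
  refine le_of_mul_le_mul_left ?_ (Nat.cast_pos.2 hh.bot_lt : (0 : ℝ) < h)
  linarith [(le_abs_self _).trans hupper]

end Character

section PrimeFactors

lemma pow_card_mul_prod_primesBelow_le {S : Finset ℕ} (hS : ∀ p ∈ S, p.Prime) (a : ℕ) :
    a ^ #S * ∏ p ∈ a.primesBelow, p ≤ a ^ #a.primesBelow * ∏ p ∈ S, p := by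
  have hext (T : Finset ℕ) (hT : T ⊆ S ∪ a.primesBelow) (F : ℕ → ℕ) :
      ∏ p ∈ T, F p = ∏ p ∈ S ∪ a.primesBelow, if p ∈ T then F p else 1 := by
    rw [prod_ite_mem, inter_eq_right.2 hT]
  rw [← prod_const, ← prod_const, hext S subset_union_left, hext S subset_union_left,
    hext _ subset_union_right, hext _ subset_union_right, ← prod_mul_distrib, ← prod_mul_distrib]
  refine prod_le_prod' fun p _ => ?_
  by_cases hpS : p ∈ S <;> by_cases hpa : p ∈ a.primesBelow
  · simp [hpS, hpa]
  · have hap : a ≤ p := not_lt.1 fun hlt => hpa (Nat.mem_primesBelow.2 ⟨hlt, hS p hpS⟩)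
    simpa [hpS, hpa] using hap
  · simpa [hpS, hpa] using (Nat.lt_of_mem_primesBelow hpa).le
  · simp [hpS, hpa]

lemma pow_card_primeFactors_mul_prod_primesBelow_le {n : ℕ} (hn : n ≠ 0) (a : ℕ) :
    a ^ #n.primeFactors * ∏ p ∈ a.primesBelow, p ≤ a ^ #a.primesBelow * n :=
  (pow_card_mul_prod_primesBelow_le (fun _ => Nat.prime_of_mem_primeFactors) a).trans <|
    Nat.mul_le_mul_left _ (Nat.le_of_dvd hn.bot_lt n.prod_primeFactors_dvd)

lemma two_pow_card_primeFactors_le_mul_sqrt {n : ℕ} (hn : n ≠ 0) :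
    (2 : ℝ) ^ #n.primeFactors ≤ 1.634 * √n := by
  -- the constant is just above `√(8 / 3)`, where `8 / 3 = (4 / 2) * (4 / 3)`
  have hprod : 4 ^ #n.primeFactors * 6 ≤ 16 * n :=
    pow_card_primeFactors_mul_prod_primesBelow_le hn 4
  have hprod' : ((2 : ℝ) ^ #n.primeFactors) ^ 2 * 6 ≤ 16 * n := by
    rw [← pow_mul', pow_mul]
    exact_mod_cast hprod
  refine le_of_pow_le_pow_left₀ two_ne_zero (by positivity) ?_
  rw [mul_pow, Real.sq_sqrt n.cast_nonneg]
  linarith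

lemma sixteen_pow_card_primeFactors_le {n : ℕ} (hn : n ≠ 0) :
    16 ^ #n.primeFactors ≤ 2 ^ 10 * n := by
  -- `30030 = 2 * 3 * 5 * 7 * 11 * 13`
  have hprod : 16 ^ #n.primeFactors * 30030 ≤ 16 ^ 6 * n :=
    pow_card_primeFactors_mul_prod_primesBelow_le hn 16
  lia

lemma two_pow_card_primeFactors_le_mul_sqrt_sqrt {n : ℕ} (hn : n ≠ 0) :
    (2 : ℝ) ^ #n.primeFactors ≤ 6 * √√n := by
  have hpow : ((2 : ℝ) ^ #n.primeFactors) ^ 4 ≤ 2 ^ 10 * n := by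
    rw [← pow_mul', pow_mul]
    exact_mod_cast sixteen_pow_card_primeFactors_le hn
  have hsqrt : √√(n : ℝ) ^ 4 = n := by
    rw [show 4 = 2 * 2 from rfl, pow_mul, Real.sq_sqrt (Real.sqrt_nonneg _),
      Real.sq_sqrt n.cast_nonneg]
  refine le_of_pow_le_pow_left₀ four_ne_zero (by positivity) ?_
  rw [mul_pow, hsqrt]
  linarith [(n.cast_nonneg : (0 : ℝ) ≤ n)]

lemma card_primeFactors_mul_le_add_one {n r : ℕ} (hn : n ≠ 0) (hr : r.Prime) :
    #(n * r).primeFactors ≤ #n.primeFactors + 1 := by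
  rw [Nat.primeFactors_mul hn hr.ne_zero, hr.primeFactors]
  exact card_union_le _ _

lemma two_pow_card_primeFactors_mul_le {n r : ℕ} (hn : n ≠ 0) (hr : r.Prime) :
    (2 : ℝ) ^ #(n * r).primeFactors ≤ 2 * 2 ^ #n.primeFactors := by
  rw [← pow_succ']
  exact pow_le_pow_right₀ one_le_two (card_primeFactors_mul_le_add_one hn hr)

lemma add_two_mul_card_le_of_odd {S : Finset ℕ} {a b : ℕ} (hba : b ≤ a) (ha : Odd a) (hb : Odd b)
    (hS : ∀ x ∈ S, Odd x ∧ b ≤ x ∧ x < a) : b + 2 * #S ≤ a := by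
  have hsub : S ⊆ (range ((a - b) / 2)).image fun i => b + 2 * i := by
    intro x hx
    obtain ⟨hxodd, hbx, hxa⟩ := hS x hx
    refine mem_image.2 ⟨(x - b) / 2, ?_, ?_⟩ <;> grind
  have hcard := (card_le_card hsub).trans card_image_le
  rw [card_range] at hcard
  lia

lemma sub_two_le_mul_prod_one_sub_inv_sq {b : ℕ} (hb : Odd b) (hb₂ : 2 ≤ b) {S : Finset ℕ}
    (hS : ∀ p ∈ S, Odd p ∧ b ≤ p) :
    (b : ℝ) - 2 ≤ (b - 2 + 2 * #S) * (∏ p ∈ S, (1 - (p : ℝ)⁻¹)) ^ 2 := by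
  induction S using Finset.induction_on_max with
  | empty => simp
  | insert a S hlt ih =>
    have hodd := hS a (mem_insert_self a S)
    have hS' : ∀ p ∈ S, Odd p ∧ b ≤ p := fun p hp => hS p (mem_insert_of_mem hp)
    have hcard : (b + 2 * #S : ℝ) ≤ a := by
      exact_mod_cast add_two_mul_card_le_of_odd hodd.2 hodd.1 hb
        fun p hp => ⟨(hS' p hp).1, (hS' p hp).2, hlt p hp⟩
    have hb' : (2 : ℝ) ≤ b := by exact_mod_cast hb₂
    have ha : (0 : ℝ) < a := by linarith [(#S).cast_nonneg (α := ℝ)]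
    -- `(1 - 1/a)² ≥ 1 - 2/a`, so the product telescopes in steps of two
    have hfactor : (b - 2 + 2 * #S : ℝ) ≤ (b + 2 * #S) * (1 - (a : ℝ)⁻¹) ^ 2 := by
      have hinv : (b + 2 * #S) * (a : ℝ)⁻¹ ≤ 1 := by
        rw [← div_eq_mul_inv]
        exact (div_le_one ha).2 hcard
      nlinarith [sq_nonneg (a : ℝ)⁻¹, (#S).cast_nonneg (α := ℝ)]
    have hmem : a ∉ S := fun h => (hlt a h).false
    rw [prod_insert hmem, card_insert_of_notMem hmem, mul_pow]
    push_cast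
    calc (b : ℝ) - 2 ≤ (b - 2 + 2 * #S) * (∏ p ∈ S, (1 - (p : ℝ)⁻¹)) ^ 2 := ih hS'
      _ ≤ (b + 2 * #S) * (1 - (a : ℝ)⁻¹) ^ 2 * (∏ p ∈ S, (1 - (p : ℝ)⁻¹)) ^ 2 := by gcongr
      _ = (b - 2 + 2 * (#S + 1)) * ((1 - (a : ℝ)⁻¹) ^ 2 * (∏ p ∈ S, (1 - (p : ℝ)⁻¹)) ^ 2) := by
        ring

lemma totient_div_eq_prod {n : ℕ} (hn : n ≠ 0) :
    (n.totient / n : ℝ) = ∏ p ∈ n.primeFactors, (1 - (p : ℝ)⁻¹) := by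
  have h := congrArg ((↑) : ℚ → ℝ) (Nat.totient_eq_mul_prod_factors n)
  push_cast at h
  rw [h, mul_div_cancel_left₀ _ (Nat.cast_ne_zero.2 hn)]

lemma one_le_mul_totient_div_sq {n : ℕ} (hn : n ≠ 0) :
    1 ≤ (6 * #n.primeFactors + 9) * (n.totient / n : ℝ) ^ 2 := by
  set T := n.primeFactors \ {2, 3}
  have hT : ∀ p ∈ T, Odd p ∧ 5 ≤ p := by
    intro p hp
    obtain ⟨hp, hp₂, hp₃⟩ : p ∈ n.primeFactors ∧ p ≠ 2 ∧ p ≠ 3 := by simpa [T] using hp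
    have hprime := Nat.prime_of_mem_primeFactors hp
    exact ⟨hprime.odd_of_ne_two hp₂, hprime.five_le_of_ne_two_of_ne_three hp₂ hp₃⟩
  have htail : (3 : ℝ) ≤ (3 + 2 * #T) * (∏ p ∈ T, (1 - (p : ℝ)⁻¹)) ^ 2 := by
    convert sub_two_le_mul_prod_one_sub_inv_sq (by decide) (by norm_num) hT using 2 <;> norm_num
  have hfactor (p : ℕ) : 0 ≤ 1 - (p : ℝ)⁻¹ ∧ 1 - (p : ℝ)⁻¹ ≤ 1 :=
    ⟨sub_nonneg.2 p.cast_inv_le_one, sub_le_self _ (by positivity)⟩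
  have hsmall : (∏ p ∈ T, (1 - (p : ℝ)⁻¹)) / 3 ≤ n.totient / n := by
    rw [totient_div_eq_prod hn]
    calc (∏ p ∈ T, (1 - (p : ℝ)⁻¹)) / 3
        = (∏ p ∈ T, (1 - (p : ℝ)⁻¹)) * ∏ p ∈ ({2, 3} : Finset ℕ), (1 - (p : ℝ)⁻¹) := by
          norm_num
          ring
      _ = ∏ p ∈ n.primeFactors ∪ {2, 3}, (1 - (p : ℝ)⁻¹) := by
        rw [← prod_sdiff subset_union_right, union_sdiff_right]
      _ ≤ ∏ p ∈ n.primeFactors, (1 - (p : ℝ)⁻¹) :=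
        prod_le_prod_of_subset_of_le_one subset_union_left (fun p _ => (hfactor p).1)
          fun p _ _ => (hfactor p).2
  have hcard : (#T : ℝ) ≤ #n.primeFactors := by
    exact_mod_cast card_le_card sdiff_subset
  have hT₀ : 0 ≤ ∏ p ∈ T, (1 - (p : ℝ)⁻¹) := prod_nonneg fun p _ => (hfactor p).1
  calc (1 : ℝ) ≤ (6 * #T + 9) * ((∏ p ∈ T, (1 - (p : ℝ)⁻¹)) / 3) ^ 2 := by linarith
    _ ≤ (6 * #n.primeFactors + 9) * (n.totient / n : ℝ) ^ 2 := by gcongr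

end PrimeFactors

section Modulus

variable {m : ℕ}

lemma le_log_of_ten_pow_le (hm : 10 ^ 15 ≤ m) : 33.9 ≤ Real.log m := by
  have hm' : (2 : ℝ) ^ 49 ≤ m := by exact_mod_cast (by norm_num : 2 ^ 49 ≤ 10 ^ 15).trans hm
  have hlog := Real.log_le_log (by positivity) hm'
  rw [Real.log_pow] at hlog
  push_cast at hlog
  linarith [Real.log_two_gt_d9]

lemma card_primeFactors_mul_le_log_add (hm : m ≠ 0) :
    2.77 * (#m.primeFactors : ℝ) ≤ Real.log m + 7 := by
  have hpow : (2 : ℝ) ^ (4 * #m.primeFactors) ≤ 2 ^ 10 * m := by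
    rw [pow_mul]
    exact_mod_cast sixteen_pow_card_primeFactors_le hm
  have hlog := Real.log_le_log (by positivity) hpow
  have hm₀ : (m : ℝ) ≠ 0 := Nat.cast_ne_zero.2 hm
  rw [Real.log_pow, Real.log_mul (by positivity) hm₀, Real.log_pow] at hlog
  push_cast at hlog
  have hω : 2.77 * (#m.primeFactors : ℝ) ≤ 4 * #m.primeFactors * Real.log 2 := by
    nlinarith [Real.log_two_gt_d9, (#m.primeFactors).cast_nonneg (α := ℝ)]
  linarith [Real.log_two_lt_d9]

lemma le_totient_div_mul_log (hm : 10 ^ 15 ≤ m) {r : ℕ} (hr : r.Prime) :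
    3.3 ≤ ((m * r).totient / (m * r : ℕ) : ℝ) * Real.log m := by
  have hm₀ : m ≠ 0 := by positivity
  have hcard : (#(m * r).primeFactors : ℝ) ≤ #m.primeFactors + 1 := by
    exact_mod_cast card_primeFactors_mul_le_add_one hm₀ hr
  have hω := card_primeFactors_mul_le_log_add hm₀
  have hL := le_log_of_ten_pow_le hm
  have hΦ := one_le_mul_totient_div_sq (mul_ne_zero hm₀ hr.ne_zero)
  have hcoeff : 3.3 ^ 2 * (6 * (#(m * r).primeFactors : ℝ) + 9) ≤ Real.log m ^ 2 := by nlinarith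
  refine le_of_pow_le_pow_left₀ two_ne_zero (by positivity) ?_
  calc (3.3 : ℝ) ^ 2
      ≤ 3.3 ^ 2 * ((6 * #(m * r).primeFactors + 9)
          * ((m * r).totient / (m * r : ℕ) : ℝ) ^ 2) := le_mul_of_one_le_right (by positivity) hΦ
    _ ≤ Real.log m ^ 2 * ((m * r).totient / (m * r : ℕ) : ℝ) ^ 2 := by
        rw [← mul_assoc]
        gcongr
    _ = (((m * r).totient / (m * r : ℕ) : ℝ) * Real.log m) ^ 2 := by ring

lemma mul_sqrt_sub_one_le_floor_mul_totient_div (hm : 10 ^ 15 ≤ m) {r : ℕ} (hr : r.Prime) :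
    3.3 * √m - 1
      ≤ ⌊√m * Real.log m⌋₊ * ((m * r).totient / (m * r : ℕ) : ℝ) := by
  have hΦ₁ : ((m * r).totient / (m * r : ℕ) : ℝ) ≤ 1 :=
    div_le_one_of_le₀ (Nat.cast_le.2 (Nat.totient_le _)) (Nat.cast_nonneg _)
  have hfloor := Nat.sub_one_lt_floor (√m * Real.log m)
  calc 3.3 * √m - 1
      ≤ √m * (((m * r).totient / (m * r : ℕ) : ℝ) * Real.log m) - 1 := by
        rw [mul_comm]
        gcongr
        exact le_totient_div_mul_log hm hr
    _ ≤ (√m * Real.log m - 1) * ((m * r).totient / (m * r : ℕ) : ℝ) := by linarith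
    _ ≤ ⌊√m * Real.log m⌋₊ * ((m * r).totient / (m * r : ℕ) : ℝ) := by gcongr

lemma two_pow_card_primeFactors_add_lt_mul_sqrt_sub_one (hm : 10 ^ 15 ≤ m) {r f : ℕ}
    (hr : r.Prime) (hf : f ∣ m) :
    (2 : ℝ) ^ #(m * r).primeFactors + 2 ^ #(m * r / f).primeFactors * √f < 3.3 * √m - 1 := by
  have hm₀ : m ≠ 0 := by positivity
  have hsieve : (2 : ℝ) ^ #(m * r).primeFactors ≤ 12 * √√m := by
    linarith [two_pow_card_primeFactors_mul_le hm₀ hr,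
      two_pow_card_primeFactors_le_mul_sqrt_sqrt hm₀]
  have hchar : (2 : ℝ) ^ #(m * r / f).primeFactors * √f ≤ 3.268 * √m := by
    obtain ⟨n, rfl⟩ := hf
    obtain ⟨hf₀, hn₀⟩ := mul_ne_zero_iff.1 hm₀
    rw [mul_assoc, Nat.mul_div_cancel_left _ hf₀.bot_lt, Nat.cast_mul,
      Real.sqrt_mul f.cast_nonneg, mul_comm √f, ← mul_assoc]
    gcongr
    linarith [two_pow_card_primeFactors_mul_le hn₀ hr,
      two_pow_card_primeFactors_le_mul_sqrt hn₀]
  have hsqrt : 5600 ≤ √√(m : ℝ) := by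
    have hpow : (5600 : ℝ) ^ 4 ≤ m := by
      exact_mod_cast (by norm_num : 5600 ^ 4 ≤ 10 ^ 15).trans hm
    refine Real.le_sqrt_of_sq_le (Real.le_sqrt_of_sq_le ?_)
    rwa [← pow_mul]
  nlinarith [Real.sq_sqrt (Real.sqrt_nonneg (m : ℝ))]

end Modulus

theorem q2_weak_bound_general (m : ℕ) (hm : 10 ^ 15 ≤ m) (χ : DirichletCharacter ℂ m)
    (hχ : χ ≠ 1) (r : ℕ) (hr : r.Prime) :
    ∃ q : ℕ, q.Prime ∧ q ≠ r ∧ χ (q : ZMod m) ∉ ({0, 1} : Set ℂ) ∧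
      (q : ℝ) < 2 * (m : ℝ) ^ ((1 : ℝ) / 2) * Real.log m := by
  by_contra! hres
  have : NeZero (m * r) := ⟨mul_ne_zero (by positivity) hr.ne_zero⟩
  set χ' := DirichletCharacter.changeLevel (dvd_mul_right m r) χ with hdef
  have hχ' : χ' ≠ 1 := (DirichletCharacter.changeLevel_eq_one_iff _).not.2 hχ
  have hone : 1 ≤ √m * Real.log m := by
    have hsqrt : 1 ≤ √(m : ℝ) := Real.one_le_sqrt.2 (by exact_mod_cast hm.trans' (by norm_num))
    nlinarith [le_log_of_ten_pow_le hm]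
  have hres' (q : ℕ) (hq : q.Prime) (hlt : q < 2 * ⌊√m * Real.log m⌋₊) :
      χ' q ∈ ({0, 1} : Set ℂ) := by
    refine changeLevel_apply_natCast_mem hq fun hqr => by_contra fun hnr => ?_
    have hle := hres q hq hqr hnr
    rw [← Real.sqrt_eq_rpow] at hle
    have hlt' : (q : ℝ) < 2 * ⌊√m * Real.log m⌋₊ := by exact_mod_cast hlt
    linarith [Nat.floor_le (zero_le_one.trans hone)]
  have hcore := mul_totient_div_le_of_forall_prime_lt hχ' (Nat.floor_pos.2 hone).ne' hres'
  rw [hdef, DirichletCharacter.conductor_changeLevel] at hcore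
  linarith [mul_sqrt_sub_one_le_floor_mul_totient_div hm hr,
    two_pow_card_primeFactors_add_lt_mul_sqrt_sub_one hm hr χ.conductor_dvd_level]

theorem q2_weak_bound (m : ℕ) (hm : (10:ℕ)^15 ≤ m)
    (χ : DirichletCharacter ℂ m) (hχ : χ ≠ 1)
    (q₁ q₂ : ℕ) (hq₁ : q₁.Prime) (hq₂ : q₂.Prime) (hlt : q₁ < q₂)
    (hnr₁ : χ (q₁ : ZMod m) ∉ ({0, 1} : Set ℂ))
    (hnr₂ : χ (q₂ : ZMod m) ∉ ({0, 1} : Set ℂ))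
    (hmin₁ : ∀ q : ℕ, q.Prime → χ (q : ZMod m) ∉ ({0, 1} : Set ℂ) → q₁ ≤ q)
    (hmin₂ : ∀ q : ℕ, q.Prime → χ (q : ZMod m) ∉ ({0, 1} : Set ℂ) → q ≠ q₁ → q₂ ≤ q) :
    (q₂ : ℝ) < 2 * (m : ℝ) ^ ((1:ℝ)/2) * Real.log m := by
  obtain ⟨q, hq, hne, hnr, hbound⟩ := q2_weak_bound_general m hm χ hχ q₁ hq₁
  exact (Nat.cast_le.2 (hmin₂ q hq hnr hne)).trans_lt hbound
end

section
/- Suppose χ is a non-principal Dirichlet character modulo a prime p ≥ 10^{19}, and suppose χ is constant on the integers in the interval (N, N+H] for some integer N and positive integer H (i.e., χ(N+1) = χ(N+2) = ⋯ = χ(N+H)). Then H < 7.1·p^{1/4}·log p. -/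
/-!
Let `k` be the order of the kernel of `χ` on the units, a proper divisor of `p - 1`: if `χ` takes
the same value at two units, then so does the `k`-th power map. Dirichlet's approximation theorem
gives a fraction `a / b` close to `N / p`. For pairs `(q, t)` with `t < q ≤ Q` and `q` coprime to
`a + b * t`, the points `(N + t * p) / q` are well separated, and multiplication by `q` carries the
integers just after such a point into `(N, N + H]` modulo `p`. A long interval of constancy thus
yields many runs of about `0.7 * log p` consecutive residues with equal `k`-th powers.

Stepanov's method bounds the number of such runs: a polynomial built from products of the
`(X + i) ^ k` vanishes to high order at the start of every run, and it is nonzero because the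
Wronskian of those products does not vanish.
-/

section Derivations

variable {R A ι : Type*} [CommRing R] [CommRing A] [Algebra R A]

/-- The ring of constants of a derivation, the scalars of the Wronskian criterion. -/
def constants (D : Derivation R A A) : Subalgebra R A where
  carrier := {c | D c = 0}
  mul_mem' {a b} (ha : D a = 0) (hb : D b = 0) := by simp [ha, hb]
  add_mem' {a b} (ha : D a = 0) (hb : D b = 0) := by simp [ha, hb]
  algebraMap_mem' r := D.map_algebraMap r

/-- The gauge transform `D + l` of a derivation: if `D U = l * U`, then it is the conjugate of `D`
by multiplication by `U`. -/
def gaugeTransform (D : Derivation R A A) (l : A) : Module.End R A :=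
  (D : A →ₗ[R] A) + LinearMap.mulLeft R l

lemma gaugeTransform_apply (D : Derivation R A A) (l P : A) :
    gaugeTransform D l P = D P + l * P :=
  rfl

lemma derivation_pow_mul_eq_gaugeTransform_pow {D : Derivation R A A} {U l : A} (hU : D U = l * U)
    (P : A) (s : ℕ) :
    ((D : A →ₗ[R] A) ^ s) (P * U) = (gaugeTransform D l ^ s) P * U := by
  induction s with
  | zero => rfl
  | succ s ih =>
    rw [pow_succ', pow_succ', Module.End.mul_apply, Module.End.mul_apply, ih,
      Derivation.coeFn_coe, D.leibniz, gaugeTransform_apply, hU]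
    simp only [smul_eq_mul]
    ring

lemma pow_sub_dvd_derivation_pow (D : Derivation R A A) {a f : A} {k : ℕ} (h : a ^ k ∣ f)
    (s : ℕ) : a ^ (k - s) ∣ ((D : A →ₗ[R] A) ^ s) f := by
  induction s with
  | zero => simpa using h
  | succ s ih =>
    obtain ⟨r, hr⟩ := ih
    rw [pow_succ', Module.End.mul_apply, hr, Derivation.coeFn_coe, D.leibniz, D.leibniz_pow,
      Nat.sub_succ']
    simp only [smul_eq_mul, nsmul_eq_mul]
    refine dvd_add (Dvd.dvd.mul_right (pow_dvd_pow _ (Nat.sub_le _ _)) _) ?_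
    exact ((Dvd.intro _ rfl).mul_left _).mul_left _

lemma dvd_derivation_pow_pow_mul_sub (D : Derivation R A A) (a r : A) (j : ℕ) :
    a ∣ ((D : A →ₗ[R] A) ^ j) (a ^ j * r) - j.factorial * D a ^ j * r := by
  induction j generalizing r with
  | zero => simp
  | succ j ih =>
    have hD : D (a ^ (j + 1) * r) = a ^ j * ((j + 1) * D a * r + a * D r) := by
      rw [D.leibniz, D.leibniz_pow, Nat.add_sub_cancel]
      simp only [smul_eq_mul, nsmul_eq_mul, Nat.cast_succ]
      ring
    rw [pow_succ, Module.End.mul_apply, Derivation.coeFn_coe, hD]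
    obtain ⟨q, hq⟩ := ih ((j + 1) * D a * r + a * D r)
    refine ⟨q + j.factorial * D a ^ j * D r, ?_⟩
    rw [Nat.factorial_succ, Nat.cast_mul, Nat.cast_succ]
    linear_combination hq

/- In characteristic zero `v / w` would be the constant; multiplying it by the constant `w ^ p`
avoids the fraction field. -/
lemma mul_pow_sub_one_mem_constants {p : ℕ} [Fact p.Prime] [CharP A p] (D : Derivation R A A)
    {v w : A} (h : w * D v = v * D w) :
    v * w ^ (p - 1) ∈ constants D := by
  obtain ⟨q, rfl⟩ : ∃ q, p = q + 2 := ⟨p - 2, by have := (Fact.out : p.Prime).two_le; omega⟩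
  have hcast : ((q + 1 : ℕ) : A) = -1 := by
    have := CharP.cast_eq_zero A (q + 2)
    push_cast at this ⊢
    linear_combination this
  change D (v * w ^ (q + 1)) = 0
  rw [D.leibniz, D.leibniz_pow, nsmul_eq_mul, hcast, Nat.add_sub_cancel]
  simp only [smul_eq_mul]
  linear_combination w ^ q * h

lemma sum_derivation_mul_eq_zero (D : Derivation R A A) {I : Finset ι} {f v : ι → A} {n : ℕ}
    (hv : ∀ s < n + 1, ∑ i ∈ I, v i * ((D : A →ₗ[R] A) ^ s) (f i) = 0) :
    ∀ s < n, ∑ i ∈ I, D (v i) * ((D : A →ₗ[R] A) ^ s) (f i) = 0 := by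
  intro s hs
  have hD := congrArg D (hv s (by omega))
  have hleibniz : ∀ i, D (v i * ((D : A →ₗ[R] A) ^ s) (f i)) =
      v i * ((D : A →ₗ[R] A) ^ (s + 1)) (f i) + D (v i) * ((D : A →ₗ[R] A) ^ s) (f i) := by
    intro i
    rw [D.leibniz, pow_succ', Module.End.mul_apply, smul_eq_mul, smul_eq_mul, mul_comm (D (v i))]
    rfl
  simpa only [map_sum, hleibniz, Finset.sum_add_distrib, hv (s + 1) (by omega), zero_add,
    map_zero] using hD

/- Wronskian criterion. Eliminating the `i₀`-th term from the relations and their derivatives leaves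
a shorter system, so by induction all the ratios `v i / v i₀` are constants. -/
theorem eq_zero_of_sum_mul_derivation_pow_eq_zero [IsDomain A] (p : ℕ) [Fact p.Prime] [CharP A p]
    (D : Derivation R A A) {I : Finset ι} {f : ι → A}
    (hf : LinearIndepOn (constants D) f (I : Set ι)) {v : ι → A}
    (hv : ∀ s < I.card, ∑ i ∈ I, v i * ((D : A →ₗ[R] A) ^ s) (f i) = 0) :
    ∀ i ∈ I, v i = 0 := by
  classical
  induction hn : I.card generalizing I v with
  | zero => simp [Finset.card_eq_zero.1 hn]
  | succ n ih =>
    intro i₀ hi₀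
    rw [hn] at hv
    have hDv := sum_derivation_mul_eq_zero D hv
    have helim : ∀ s < (I.erase i₀).card, ∑ i ∈ I.erase i₀,
        (v i₀ * D (v i) - v i * D (v i₀)) * ((D : A →ₗ[R] A) ^ s) (f i) = 0 := by
      intro s hs
      rw [Finset.card_erase_of_mem hi₀, hn] at hs
      have hsum : ∑ i ∈ I, (v i₀ * D (v i) - v i * D (v i₀)) * ((D : A →ₗ[R] A) ^ s) (f i) =
          v i₀ * ∑ i ∈ I, D (v i) * ((D : A →ₗ[R] A) ^ s) (f i) -
            D (v i₀) * ∑ i ∈ I, v i * ((D : A →ₗ[R] A) ^ s) (f i) := by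
        rw [Finset.mul_sum, Finset.mul_sum, ← Finset.sum_sub_distrib]
        exact Finset.sum_congr rfl fun i _ => by ring
      rwa [hDv s hs, hv s (by omega), mul_zero, mul_zero, sub_zero, ← Finset.add_sum_erase _ _ hi₀,
        sub_self, zero_mul, zero_add] at hsum
    have hratio : ∀ i ∈ I, v i₀ * D (v i) = v i * D (v i₀) := by
      intro i hi
      obtain rfl | hne := eq_or_ne i i₀
      · rfl
      · exact sub_eq_zero.1 <| ih (hf.mono (Finset.coe_subset.2 (Finset.erase_subset _ _))) helim
          (by simp [hi₀, hn]) i (Finset.mem_erase.2 ⟨hne, hi⟩)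
    let c : ι → constants D := fun i => if hi : i ∈ I then
      ⟨v i * v i₀ ^ (p - 1), mul_pow_sub_one_mem_constants D (hratio i hi)⟩ else 0
    have hc : ∀ i ∈ I, c i = 0 := by
      refine linearIndepOn_finset_iff.1 hf c ?_
      have hzero := hv 0 n.succ_pos
      calc ∑ i ∈ I, c i • f i = ∑ i ∈ I, v i₀ ^ (p - 1) * (v i * f i) := by
            refine Finset.sum_congr rfl fun i hi => ?_
            simp only [c, dif_pos hi, Subalgebra.smul_def, smul_eq_mul]
            ring
        _ = 0 := by simpa [Finset.mul_sum] using congrArg (v i₀ ^ (p - 1) * ·) hzero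
    have hpow : v i₀ * v i₀ ^ (p - 1) = 0 := by
      simpa [c, hi₀] using congrArg Subtype.val (hc i₀ hi₀)
    rcases mul_eq_zero.1 hpow with h | h
    exacts [h, eq_zero_of_pow_eq_zero h]

end Derivations

section GaugeWronskian

variable {R A ι : Type*} [CommRing R] [CommRing A] [Algebra R A] [Fintype ι]

/-- The Wronskian matrix of the products `P i * U i`, where `D (U i) = l i * U i`, with the common
factor `U i` removed from each column. The rows are indexed by `ι` as well, through an arbitrary
enumeration, so that the matrix has a determinant. -/
noncomputable def gaugeWronskian (D : Derivation R A A) (l P : ι → A) : Matrix ι ι A :=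
  .of fun s i => (gaugeTransform D (l i) ^ (Fintype.equivFin ι s : ℕ)) (P i)

lemma gaugeWronskian_mulVec_apply {D : Derivation R A A} {U l : ι → A}
    (hU : ∀ i, D (U i) = l i * U i) (P : ι → A) (s : ι) :
    (gaugeWronskian D l P).mulVec U s =
      ((D : A →ₗ[R] A) ^ (Fintype.equivFin ι s : ℕ)) (∑ i, P i * U i) := by
  rw [map_sum]
  exact Finset.sum_congr rfl fun i _ =>
    (derivation_pow_mul_eq_gaugeTransform_pow (hU i) (P i) _).symm

variable [DecidableEq ι]

lemma det_gaugeWronskian_ne_zero [IsDomain A] (p : ℕ) [Fact p.Prime] [CharP A p]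
    {D : Derivation R A A} {U l P : ι → A} (hU : ∀ i, D (U i) = l i * U i) (hU0 : ∀ i, U i ≠ 0)
    (hPU : LinearIndependent (constants D) fun i => P i * U i) :
    (gaugeWronskian D l P).det ≠ 0 := by
  intro hdet
  obtain ⟨v, hv0, hv⟩ := Matrix.exists_mulVec_eq_zero_iff.2 hdet
  refine hv0 (funext fun i => ?_)
  have hrel : ∀ s < (Finset.univ : Finset ι).card, ∑ i, (v i * ∏ j ∈ Finset.univ.erase i, U j) *
      ((D : A →ₗ[R] A) ^ s) (P i * U i) = 0 := by
    intro s hs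
    calc _ = ∑ i, (∏ j, U j) * ((gaugeTransform D (l i) ^ s) (P i) * v i) := by
          refine Finset.sum_congr rfl fun i _ => ?_
          rw [derivation_pow_mul_eq_gaugeTransform_pow (hU i),
            ← Finset.mul_prod_erase _ _ (Finset.mem_univ i)]
          ring
      _ = (∏ j, U j) * (gaugeWronskian D l P).mulVec v ((Fintype.equivFin ι).symm ⟨s, hs⟩) := by
          rw [← Finset.mul_sum]
          simp [gaugeWronskian, Matrix.mulVec, dotProduct]
      _ = 0 := by rw [hv, Pi.zero_apply, mul_zero]
  have hvU := eq_zero_of_sum_mul_derivation_pow_eq_zero p D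
    (linearIndepOn_finset_iff.2 fun c hc i _ => Fintype.linearIndependent_iff.1 hPU c hc i)
    hrel i (Finset.mem_univ i)
  exact (mul_eq_zero.1 hvU).resolve_right (Finset.prod_ne_zero_iff.2 fun j _ => hU0 j)

lemma pow_dvd_det_gaugeWronskian_mul {D : Derivation R A A} {U l P : ι → A}
    (hU : ∀ i, D (U i) = l i * U i) {a : A} {k : ℕ} (h : a ^ k ∣ ∑ i, P i * U i) (i : ι) :
    a ^ (k + 1 - Fintype.card ι) ∣ (gaugeWronskian D l P).det * U i := by
  have hcramer := congrFun
    (Matrix.mulVec_mulVec U (gaugeWronskian D l P).adjugate (gaugeWronskian D l P)) i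
  rw [Matrix.adjugate_mul, Matrix.smul_mulVec, Matrix.one_mulVec, Pi.smul_apply,
    smul_eq_mul] at hcramer
  rw [← hcramer]
  refine Finset.dvd_sum fun s _ => Dvd.dvd.mul_left ?_ _
  rw [gaugeWronskian_mulVec_apply hU]
  exact (pow_dvd_pow _ (by omega)).trans (pow_sub_dvd_derivation_pow D h _)

end GaugeWronskian

section ZeroEstimate

open Polynomial

variable {F ι σ : Type*} [Field F]

lemma natDegree_det_le {R : Type*} [CommRing R] [Fintype ι] [DecidableEq ι] {B : Matrix ι ι R[X]}
    {N : ι → ℕ} (h : ∀ s i, (B s i).natDegree ≤ N s) : B.det.natDegree ≤ ∑ s, N s := by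
  rw [← Matrix.det_transpose, Matrix.det_apply]
  exact natDegree_sum_le_of_forall_le _ _ fun τ _ => (natDegree_smul_le _ _).trans <|
    (natDegree_prod_le _ _).trans <| Finset.sum_le_sum fun s _ => h s _

lemma natDegree_gaugeTransform_pow_le {g l P : F[X]} {m E : ℕ} (hg : g.natDegree ≤ m + 1)
    (hl : l.natDegree ≤ m) (hP : P.natDegree ≤ E) (s : ℕ) :
    ((gaugeTransform (mkDerivation F g) l ^ s) P).natDegree ≤ E + s * m := by
  induction s with
  | zero => simpa using hP
  | succ s ih =>
    set Q := (gaugeTransform (mkDerivation F g) l ^ s) P with hQ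
    rw [pow_succ', Module.End.mul_apply, ← hQ, gaugeTransform_apply, mkDerivation_apply,
      smul_eq_mul]
    refine natDegree_add_le_of_degree_le ?_ ?_
    · obtain hQ0 | hQ0 := Nat.eq_zero_or_pos Q.natDegree
      · simp [derivative_of_natDegree_zero hQ0]
      · have := natDegree_mul_le (p := derivative Q) (q := g)
        have := natDegree_derivative_le Q
        rw [Nat.succ_mul]
        omega
    · have := natDegree_mul_le (p := l) (q := Q)
      rw [Nat.succ_mul]
      omega

lemma mem_constants_mkDerivation_iff {g : F[X]} (hg : g ≠ 0) {c : F[X]} :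
    c ∈ constants (mkDerivation F g) ↔ derivative c = 0 := by
  change mkDerivation F g c = 0 ↔ _
  rw [mkDerivation_apply, smul_eq_mul, mul_eq_zero, or_iff_left hg]

/-- The logarithmic derivative of `f` along the vector field `g * d/dX` is a polynomial of degree
at most `m`. -/
def LogDerivDegLE (g : F[X]) (m : ℕ) (f : F[X]) : Prop :=
  ∃ l : F[X], l.natDegree ≤ m ∧ mkDerivation F g f = l * f

namespace LogDerivDegLE

variable {g f₁ f₂ : F[X]} {m : ℕ}

lemma one : LogDerivDegLE g m 1 :=
  ⟨0, by simp, by simp⟩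

lemma mul (h₁ : LogDerivDegLE g m f₁) (h₂ : LogDerivDegLE g m f₂) :
    LogDerivDegLE g m (f₁ * f₂) := by
  obtain ⟨l₁, hl₁, hf₁⟩ := h₁
  obtain ⟨l₂, hl₂, hf₂⟩ := h₂
  refine ⟨l₁ + l₂, natDegree_add_le_of_degree_le hl₁ hl₂, ?_⟩
  rw [Derivation.leibniz, hf₁, hf₂, smul_eq_mul, smul_eq_mul]
  ring

lemma pow (h : LogDerivDegLE g m f₁) (n : ℕ) : LogDerivDegLE g m (f₁ ^ n) := by
  induction n with
  | zero => simpa using one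
  | succ n ih => exact pow_succ f₁ n ▸ ih.mul h

lemma prod {S : Finset ι} {f : ι → F[X]} (h : ∀ i ∈ S, LogDerivDegLE g m (f i)) :
    LogDerivDegLE g m (∏ i ∈ S, f i) :=
  Finset.prod_induction f _ (fun _ _ => mul) one h

lemma of_dvd (hg : g ≠ 0) (hgm : g.natDegree ≤ m + 1) {a : F} (h : X - C a ∣ g) :
    LogDerivDegLE g m (X - C a) := by
  obtain ⟨l, rfl⟩ := h
  refine ⟨l, ?_, by simp [mkDerivation_apply, mul_comm]⟩
  rw [natDegree_mul (left_ne_zero_of_mul hg) (right_ne_zero_of_mul hg), natDegree_X_sub_C] at hgm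
  omega

end LogDerivDegLE

/-- Independence of the family `U` over the field of constants, with coefficients of degree at most
`E`: those products `P i * U i` with `natDegree (P i) ≤ E` that do not vanish are linearly
independent over the polynomials with zero derivative. -/
def ConstIndep (I : Finset ι) (U : ι → F[X]) (E : ℕ) : Prop :=
  ∀ c P : ι → F[X], (∀ i ∈ I, derivative (c i) = 0) → (∀ i ∈ I, (P i).natDegree ≤ E) →
    ∑ i ∈ I, c i * (P i * U i) = 0 → ∀ i ∈ I, c i * P i = 0

open scoped Classical in
lemma ConstIndep.linearIndepOn {g : F[X]} (hg : g ≠ 0) {I : Finset ι} {U : ι → F[X]} {E : ℕ}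
    (hI : ConstIndep I U E) {P : ι → F[X]} (hP : ∀ i ∈ I, (P i).natDegree ≤ E) :
    LinearIndepOn (constants (mkDerivation F g)) (fun i => P i * U i)
      (I.filter (P · ≠ 0) : Finset ι) := by
  refine linearIndepOn_finset_iff.2 fun c hc i hi => ?_
  rw [Finset.sum_filter] at hc
  obtain ⟨hiI, hPi⟩ := Finset.mem_filter.1 hi
  have hcP := hI (fun i => c i) P (fun i _ => (mem_constants_mkDerivation_iff hg).1 (c i).2) hP ?_
    i hiI
  · simpa [hPi] using hcP
  · rw [← hc]
    refine Finset.sum_congr rfl fun i _ => ?_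
    split_ifs with h
    · rfl
    · simp [not_not.1 h]

/-- The point `a` is a zero of order less than `k` of every nontrivial combination of the family
`U` with coefficients of degree at most `E`. -/
def RigidAt (a : F) (k E : ℕ) (I : Finset ι) (U : ι → F[X]) : Prop :=
  ∀ P : ι → F[X], (∀ i ∈ I, (P i).natDegree ≤ E) → (X - C a) ^ k ∣ ∑ i ∈ I, P i * U i →
    ∀ i ∈ I, P i = 0

lemma not_X_sub_C_pow_dvd_sum [Fintype ι] [Nonempty ι] (p : ℕ) [Fact p.Prime]
    [CharP F p] {g : F[X]} {m E k : ℕ} (hg : g.natDegree ≤ m + 1) {U P : ι → F[X]}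
    (hU : ∀ i, LogDerivDegLE g m (U i)) (hP : ∀ i, (P i).natDegree ≤ E) {a : F}
    (ha : ∀ i, (U i).eval a ≠ 0)
    (hPU : LinearIndependent (constants (mkDerivation F g)) fun i => P i * U i)
    (hk : Fintype.card ι * (E + 1) + (Fintype.card ι).choose 2 * m ≤ k) :
    ¬ (X - C a) ^ k ∣ ∑ i, P i * U i := by
  classical
  intro hdvd
  choose l hlm hl using hU
  set B := gaugeWronskian (mkDerivation F g) l P with hB
  have hdet : B.det ≠ 0 :=
    det_gaugeWronskian_ne_zero p hl (fun i h => ha i (by rw [h, eval_zero])) hPU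
  have hdvd_det : (X - C a) ^ (k + 1 - Fintype.card ι) ∣ B.det := by
    let i := Classical.arbitrary ι
    refine (IsCoprime.pow_left ?_).dvd_of_dvd_mul_right (pow_dvd_det_gaugeWronskian_mul hl hdvd i)
    rw [(irreducible_X_sub_C a).coprime_iff_not_dvd, dvd_iff_isRoot]
    exact ha i
  have hlower := natDegree_le_of_dvd hdvd_det hdet
  rw [natDegree_pow, natDegree_X_sub_C, mul_one] at hlower
  have hupper : B.det.natDegree ≤ ∑ s, (E + (Fintype.equivFin ι s : ℕ) * m) :=
    natDegree_det_le fun s i => natDegree_gaugeTransform_pow_le hg (hlm i) (hP i) _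
  rw [Equiv.sum_comp (Fintype.equivFin ι) fun s => E + (s : ℕ) * m,
    Fin.sum_univ_eq_sum_range fun s => E + s * m, Finset.sum_add_distrib, ← Finset.sum_mul,
    Finset.sum_range_id, ← Nat.choose_two_right, Finset.sum_const, Finset.card_range,
    smul_eq_mul] at hupper
  have hcard : 0 < Fintype.card ι := Fintype.card_pos
  rw [Nat.mul_succ] at hk
  omega

theorem ConstIndep.rigidAt (p : ℕ) [Fact p.Prime] [CharP F p] {g : F[X]} (hg : g ≠ 0)
    {m E k : ℕ} (hgm : g.natDegree ≤ m + 1) {I : Finset ι} {U : ι → F[X]}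
    (hU : ∀ i ∈ I, LogDerivDegLE g m (U i)) (hI : ConstIndep I U E) {a : F}
    (ha : ∀ i ∈ I, (U i).eval a ≠ 0) (hk : I.card * (E + 1) + I.card.choose 2 * m ≤ k) :
    RigidAt a k E I U := by
  classical
  intro P hP hdvd
  set J := I.filter (P · ≠ 0) with hJ
  have hJI : J ⊆ I := Finset.filter_subset _ _
  suffices h : J = ∅ from fun i hi => not_not.1 fun hPi =>
    Finset.notMem_empty i (h ▸ Finset.mem_filter.2 ⟨hi, hPi⟩)
  by_contra hne
  have : Nonempty J := (Finset.nonempty_iff_ne_empty.2 hne).to_subtype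
  have hcard : J.card ≤ I.card := Finset.card_le_card hJI
  refine not_X_sub_C_pow_dvd_sum p hgm (fun i : J => hU i (hJI i.2))
    (fun i => hP i (hJI i.2)) (fun i => ha i (hJI i.2)) (hI.linearIndepOn hg hP) (k := k) ?_ ?_
  · rw [Fintype.card_coe]
    have := Nat.choose_le_choose 2 hcard
    exact le_trans (by gcongr) hk
  · rwa [Finset.sum_coe_sort J fun i => P i * U i, hJ, Finset.sum_filter_of_ne]
    exact fun i _ h hPi => h (by rw [hPi, zero_mul])

/- The term of least weight with a nonzero coefficient cannot be cancelled by the others, which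
vanish to order `k` more. -/
lemma eq_zero_of_sum_X_sub_C_pow_mul_eq_zero {a : F} {k E : ℕ} {S : Finset σ} {w : σ → ℕ}
    (hw : (S : Set σ).Pairwise fun s t => w s + k ≤ w t ∨ w t + k ≤ w s) {I : Finset ι}
    {U P : σ → ι → F[X]} (hU : ∀ s ∈ S, RigidAt a k E I (U s))
    (hP : ∀ s ∈ S, ∀ i ∈ I, (P s i).natDegree ≤ E)
    (hsum : ∑ s ∈ S, (X - C a) ^ w s * ∑ i ∈ I, P s i * U s i = 0) :
    ∀ s ∈ S, ∀ i ∈ I, P s i = 0 := by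
  classical
  suffices hG : ∀ s ∈ S, ∑ i ∈ I, P s i * U s i = 0 from fun s hs =>
    hU s hs (P s) (hP s hs) (hG s hs ▸ dvd_zero _)
  set G : σ → F[X] := fun s => ∑ i ∈ I, P s i * U s i
  by_contra! hne
  obtain ⟨s₀, hs₀, hG₀⟩ := hne
  obtain ⟨s, hs, hmin⟩ := Finset.exists_min_image (S.filter (G · ≠ 0)) w
    ⟨s₀, Finset.mem_filter.2 ⟨hs₀, hG₀⟩⟩
  obtain ⟨hsS, hGs⟩ := Finset.mem_filter.1 hs
  have hrest : (X - C a) ^ (w s + k) ∣ ∑ t ∈ S.erase s, (X - C a) ^ w t * G t := by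
    refine Finset.dvd_sum fun t ht => ?_
    obtain ⟨hts, htS⟩ := Finset.mem_erase.1 ht
    obtain hGt | hGt := eq_or_ne (G t) 0
    · simp [hGt]
    · have hst := hmin t (Finset.mem_filter.2 ⟨htS, hGt⟩)
      have hsep := hw hsS htS hts.symm
      exact (pow_dvd_pow _ (by omega)).mul_right _
  rw [← Finset.add_sum_erase _ _ hsS] at hsum
  have hdvd : (X - C a) ^ k ∣ G s := by
    rw [← mul_dvd_mul_iff_left (pow_ne_zero (w s) (X_sub_C_ne_zero a)), ← pow_add,
      eq_neg_of_add_eq_zero_left hsum]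
    exact hrest.neg_right
  exact hGs (Finset.sum_eq_zero fun i hi => by rw [hU s hsS (P s) (hP s hsS) hdvd i hi, zero_mul])

end ZeroEstimate

section ConstantIndependence

open Polynomial

lemma pairwise_separated_add_mul {p k R : ℕ} (hRk : R * k ≤ p) (N : ℕ) :
    ((Finset.range N ×ˢ Finset.range R : Finset (ℕ × ℕ)) : Set (ℕ × ℕ)).Pairwise fun s t =>
      p * s.1 + k * s.2 + k ≤ p * t.1 + k * t.2 ∨ p * t.1 + k * t.2 + k ≤ p * s.1 + k * s.2 := by
  have hlt : ∀ {j j' e e' : ℕ}, e < R → j < j' → p * j + k * e + k ≤ p * j' + k * e' := by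
    intro j j' e e' he hj
    calc p * j + k * e + k = p * j + (e + 1) * k := by ring
      _ ≤ p * j + p := by gcongr; exact (Nat.mul_le_mul_right k he).trans hRk
      _ = p * (j + 1) := by ring
      _ ≤ p * j' + k * e' := (Nat.mul_le_mul_left p hj).trans (Nat.le_add_right _ _)
  have heq : ∀ {j e e' : ℕ}, e < e' → p * j + k * e + k ≤ p * j + k * e' := by
    intro j e e' he
    rw [add_assoc, ← Nat.mul_succ]
    gcongr
    exact he
  rintro ⟨j, e⟩ hs ⟨j', e'⟩ ht hne
  obtain ⟨-, he⟩ := Finset.mem_product.1 hs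
  obtain ⟨-, he'⟩ := Finset.mem_product.1 ht
  rw [Finset.mem_range] at he he'
  rcases lt_trichotomy j j' with hj | rfl | hj
  · exact .inl (hlt he hj)
  · rcases lt_or_gt_of_ne fun h => hne (Prod.ext rfl h) with h | h
    exacts [.inl (heq h), .inr (heq h)]
  · exact .inr (hlt he' hj)

variable {F ι : Type*} [Field F] (p : ℕ) [Fact p.Prime] [CharP F p]

lemma exists_eq_comp_X_sub_C_pow_of_derivative_eq_zero (a : F) {c : F[X]} (hc : derivative c = 0) :
    ∃ q : F[X], c = q.comp ((X - C a) ^ p) := by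
  have hshift : (X + C (a ^ p)).comp ((X - C a) ^ p) = X ^ p := by simp [sub_pow_char]
  refine ⟨(contract p c).comp (X + C (a ^ p)), ?_⟩
  rw [comp_assoc, hshift, ← expand_eq_comp_X_pow, expand_contract p hc (Fact.out : p.Prime).ne_zero]

lemma exists_eq_sum_X_sub_C_pow_of_derivative_eq_zero (a : F) {I : Finset ι} {c : ι → F[X]}
    (hc : ∀ i ∈ I, derivative (c i) = 0) : ∃ (N : ℕ) (γ : ι → ℕ → F), ∀ i ∈ I,
      c i = ∑ j ∈ Finset.range N, C (γ i j) * (X - C a) ^ (p * j) := by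
  choose! q hq using fun i hi => exists_eq_comp_X_sub_C_pow_of_derivative_eq_zero p a (hc i hi)
  refine ⟨I.sup (fun i => (q i).natDegree) + 1, fun i => (q i).coeff, fun i hi => ?_⟩
  have hdeg : (q i).natDegree < I.sup (fun i => (q i).natDegree) + 1 :=
    Nat.lt_succ_of_le (Finset.le_sup (f := fun i => (q i).natDegree) hi)
  simp only [hq i hi, comp, eval₂_eq_sum_range' _ hdeg, pow_mul]

lemma RigidAt.constIndep {a : F} {k R E : ℕ} (hRk : R * k ≤ p) {I : Finset ι} {U : ℕ → ι → F[X]}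
    (hU : ∀ e < R, RigidAt a k E I (U e)) :
    ConstIndep (Finset.range R ×ˢ I) (fun x => (X - C a) ^ (k * x.1) * U x.1 x.2) E := by
  intro c P hc hP hsum
  obtain ⟨N, γ, hγ⟩ := exists_eq_sum_X_sub_C_pow_of_derivative_eq_zero p a hc
  have hexpand : ∑ s ∈ Finset.range N ×ˢ Finset.range R, (X - C a) ^ (p * s.1 + k * s.2) *
      ∑ i ∈ I, C (γ (s.2, i) s.1) * P (s.2, i) * U s.2 i = 0 := by
    rw [← hsum, Finset.sum_product_right, Finset.sum_product]
    refine Finset.sum_congr rfl fun e he => ?_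
    simp only [Finset.mul_sum]
    rw [Finset.sum_comm]
    refine Finset.sum_congr rfl fun i hi => ?_
    rw [hγ (e, i) (Finset.mem_product.2 ⟨he, hi⟩), Finset.sum_mul]
    exact Finset.sum_congr rfl fun j _ => by ring
  have hzero : ∀ s ∈ Finset.range N ×ˢ Finset.range R, ∀ i ∈ I,
      C (γ (s.2, i) s.1) * P (s.2, i) = 0 := by
    refine eq_zero_of_sum_X_sub_C_pow_mul_eq_zero (E := E) (pairwise_separated_add_mul hRk N)
      (fun s hs => ?_) (fun s hs i hi => ?_) hexpand
    · exact hU s.2 (Finset.mem_range.1 (Finset.mem_product.1 hs).2)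
    · exact (natDegree_C_mul_le _ _).trans
        (hP _ (Finset.mem_product.2 ⟨(Finset.mem_product.1 hs).2, hi⟩))
  rintro ⟨e, i⟩ hx
  obtain ⟨he, hi⟩ := Finset.mem_product.1 hx
  rw [hγ _ hx, Finset.sum_mul]
  refine Finset.sum_eq_zero fun j hj => ?_
  rw [mul_right_comm, hzero (j, e) (Finset.mem_product.2 ⟨hj, he⟩) i hi, zero_mul]

end ConstantIndependence

section BalancedProducts

open Polynomial

variable {F : Type*} [Field F]

/-- The product of the `k`-th powers of the linear forms with roots in `S`, times a power of
`(X - b) ^ k` whose exponent `φ S` will be chosen to make the total number of factors a multiple of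
a given `d`: the product is then `1` wherever all these `k`-th powers agree and are a `d`-th root of
unity. -/
noncomputable def balancedProd (k : ℕ) (b : F) (φ : Finset F → ℕ) (S : Finset F) : F[X] :=
  (∏ a ∈ S, (X - C a) ^ k) * (X - C b) ^ (k * φ S)

lemma balancedProd_insert [DecidableEq F] (k : ℕ) (b : F) (φ : Finset F → ℕ) {S : Finset F} {t : F}
    (ht : t ∉ S) : balancedProd k b φ (insert t S) =
      (X - C t) ^ k * balancedProd k b (fun S => φ (insert t S)) S := by
  rw [balancedProd, balancedProd, Finset.prod_insert ht, mul_assoc]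

lemma eval_balancedProd (k : ℕ) (b : F) (φ : Finset F → ℕ) (S : Finset F) (x : F) :
    (balancedProd k b φ S).eval x = (∏ a ∈ S, (x - a) ^ k) * (x - b) ^ (k * φ S) := by
  simp [balancedProd, eval_prod]

lemma eval_balancedProd_ne_zero (k : ℕ) (φ : Finset F → ℕ) {b x : F} {S : Finset F} (hS : x ∉ S)
    (hb : x ≠ b) : (balancedProd k b φ S).eval x ≠ 0 := by
  rw [eval_balancedProd]
  exact mul_ne_zero (Finset.prod_ne_zero_iff.2 fun a ha => pow_ne_zero _ <|
    sub_ne_zero.2 fun h => hS (h ▸ ha)) (pow_ne_zero _ (sub_ne_zero.2 hb))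

lemma logDerivDegLE_balancedProd {g : F[X]} (hg : g ≠ 0) {m : ℕ} (hgm : g.natDegree ≤ m + 1)
    (k : ℕ) {b : F} (φ : Finset F → ℕ) {S : Finset F} (hS : ∀ a ∈ S, X - C a ∣ g)
    (hb : X - C b ∣ g) : LogDerivDegLE g m (balancedProd k b φ S) :=
  (LogDerivDegLE.prod fun a ha => (LogDerivDegLE.of_dvd hg hgm (hS a ha)).pow k).mul
    ((LogDerivDegLE.of_dvd hg hgm hb).pow _)

lemma natDegree_balancedProd_le (k : ℕ) (b : F) (φ : Finset F → ℕ) (S : Finset F) :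
    (balancedProd k b φ S).natDegree ≤ k * (S.card + φ S) := by
  rw [mul_add]
  refine natDegree_mul_le.trans (add_le_add ((natDegree_prod_le _ _).trans ?_) ?_)
  · simp [mul_comm]
  · rw [natDegree_pow, natDegree_X_sub_C, mul_one]

lemma ConstIndep.powerset_insert (p : ℕ) [Fact p.Prime] [CharP F p] [DecidableEq F] {k E : ℕ}
    (hkp : 2 * k ≤ p) {b t : F} {T : Finset F} (ht : t ∉ T)
    (hrigid : ∀ φ, RigidAt t k E T.powerset (balancedProd k b φ)) (φ : Finset F → ℕ) :
    ConstIndep (insert t T).powerset (balancedProd k b φ) E := by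
  intro c P hc hP hsum
  let adjoin : ℕ × Finset F → Finset F := fun x => if x.1 = 0 then x.2 else insert t x.2
  have hadjoin : ∀ x ∈ Finset.range 2 ×ˢ T.powerset, adjoin x ∈ (insert t T).powerset := by
    rintro ⟨e, S⟩ hx
    have hST : S ⊆ T := Finset.mem_powerset.1 (Finset.mem_product.1 hx).2
    rw [Finset.mem_powerset]
    dsimp only [adjoin]
    split_ifs
    exacts [hST.trans (Finset.subset_insert _ _), Finset.insert_subset_insert _ hST]
  have hindep := RigidAt.constIndep p hkp (a := t) (E := E) (I := T.powerset)
    (U := fun e => balancedProd k b fun S => φ (adjoin (e, S))) fun e _ => hrigid _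
  have hzero := hindep (c ∘ adjoin) (P ∘ adjoin) (fun x hx => hc _ (hadjoin x hx))
    (fun x hx => hP _ (hadjoin x hx)) ?_
  · intro S hS
    rw [Finset.powerset_insert, Finset.mem_union, Finset.mem_image] at hS
    obtain hS | ⟨S, hS, rfl⟩ := hS
    · exact hzero (0, S) (Finset.mem_product.2 ⟨by simp, hS⟩)
    · exact hzero (1, S) (Finset.mem_product.2 ⟨by simp, hS⟩)
  · rw [← hsum, Finset.sum_powerset_insert ht, Finset.sum_product, Finset.sum_range_succ,
      Finset.sum_range_one]
    refine congrArg₂ (· + ·) (Finset.sum_congr rfl fun S _ => ?_)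
      (Finset.sum_congr rfl fun S hS => ?_)
    · simp [adjoin]
    · rw [balancedProd_insert _ _ _ fun h => ht (Finset.mem_powerset.1 hS h)]
      simp [adjoin]

lemma ConstIndep.rigidAt_powerset (p : ℕ) [Fact p.Prime] [CharP F p] {g : F[X]} (hg : g ≠ 0)
    {m E k : ℕ} (hgm : g.natDegree ≤ m + 1) {b t : F} (hbg : X - C b ∣ g)
    {T : Finset F} (hTg : ∀ a ∈ T, X - C a ∣ g) (htT : t ∉ T) (htb : t ≠ b)
    (hk : 2 ^ T.card * (E + 1) + (2 ^ T.card).choose 2 * m ≤ k) {φ : Finset F → ℕ}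
    (hφ : ConstIndep T.powerset (balancedProd k b φ) E) :
    RigidAt t k E T.powerset (balancedProd k b φ) := by
  refine hφ.rigidAt p hg hgm (fun S hS => ?_) (fun S hS => ?_) (by rwa [Finset.card_powerset])
  · exact logDerivDegLE_balancedProd hg hgm k φ
      (fun a ha => hTg a (Finset.mem_powerset.1 hS ha)) hbg
  · exact eval_balancedProd_ne_zero k φ (fun h => htT (Finset.mem_powerset.1 hS h)) htb

theorem constIndep_powerset_balancedProd (p : ℕ) [Fact p.Prime] [CharP F p] {g : F[X]}
    (hg : g ≠ 0) {m E k : ℕ} (hgm : g.natDegree ≤ m + 1) (hkp : 2 * k ≤ p) {b : F}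
    (hbg : X - C b ∣ g) {T : Finset F} (hTg : ∀ a ∈ T, X - C a ∣ g) (hbT : b ∉ T)
    (hk : 2 ^ T.card * (E + 1) + (2 ^ T.card).choose 2 * m ≤ k) (φ : Finset F → ℕ) :
    ConstIndep T.powerset (balancedProd k b φ) E := by
  classical
  induction T using Finset.induction_on generalizing φ with
  | empty =>
    intro c P _ _ hsum S hS
    rw [Finset.powerset_empty, Finset.mem_singleton] at hS
    rw [Finset.powerset_empty, Finset.sum_singleton, ← mul_assoc] at hsum
    subst hS
    refine (mul_eq_zero.1 hsum).resolve_right ?_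
    simpa [balancedProd] using fun h => absurd h (X_sub_C_ne_zero b)
  | insert t T ht ih =>
    rw [Finset.forall_mem_insert] at hTg
    rw [Finset.mem_insert, not_or] at hbT
    have hpow : 2 ^ T.card ≤ 2 ^ (insert t T).card :=
      Nat.pow_le_pow_right two_pos (Finset.card_le_card (Finset.subset_insert _ _))
    have hkT : 2 ^ T.card * (E + 1) + (2 ^ T.card).choose 2 * m ≤ k := by
      have := Nat.choose_le_choose 2 hpow
      exact le_trans (by gcongr) hk
    exact ConstIndep.powerset_insert p hkp ht (fun φ => (ih hTg.2 hbT.2 hkT φ).rigidAt_powerset p hg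
      hgm hbg hTg.2 ht (Ne.symm hbT.1) hkT) φ

end BalancedProducts

section Stepanov

open Polynomial

variable {F ι : Type*} [Field F]

lemma mem_degreeLT_succ_iff {E : ℕ} {P : F[X]} : P ∈ degreeLT F (E + 1) ↔ P.natDegree ≤ E := by
  rw [degreeLT_succ_eq_degreeLE, mem_degreeLE, natDegree_le_iff_degree_le]

lemma finrank_degreeLT (n : ℕ) : Module.finrank F (degreeLT F n) = n := by
  rw [(degreeLTEquiv F n).finrank_eq, Module.finrank_fin_fun]

/- The conditions form a linear system with more unknown coefficients than equations. -/
lemma exists_ne_zero_sum_gaugeTransform_pow_eq_zero_of_fintype [Fintype ι] {g : F[X]} {m E M : ℕ}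
    (hg : g.natDegree ≤ m + 1) {l : ι → F[X]} (hl : ∀ i, (l i).natDegree ≤ m)
    (hM : M * (E + 1) + M.choose 2 * m < Fintype.card ι * (E + 1)) :
    ∃ P : ι → degreeLT F (E + 1), P ≠ 0 ∧
      ∀ s < M, ∑ i, (gaugeTransform (mkDerivation F g) (l i) ^ s) (P i) = 0 := by
  let L (s : ℕ) (i : ι) : degreeLT F (E + 1) →ₗ[F] degreeLT F (E + s * m + 1) :=
    (gaugeTransform (mkDerivation F g) (l i) ^ s).restrict fun P hP => mem_degreeLT_succ_iff.2 <|
      natDegree_gaugeTransform_pow_le hg (hl i) (mem_degreeLT_succ_iff.1 hP) s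
  let Φ : (ι → degreeLT F (E + 1)) →ₗ[F] (s : Fin M) → degreeLT F (E + s * m + 1) :=
    LinearMap.pi fun s => ∑ i, L s i ∘ₗ LinearMap.proj i
  have hfinrank : Module.finrank F ((s : Fin M) → degreeLT F (E + s * m + 1)) <
      Module.finrank F (ι → degreeLT F (E + 1)) := by
    simp only [Module.finrank_pi_fintype, finrank_degreeLT, Finset.sum_const, Finset.card_univ,
      smul_eq_mul]
    rwa [Fin.sum_univ_eq_sum_range fun s => E + s * m + 1,
      Finset.sum_congr rfl fun s _ => add_right_comm E (s * m) 1, Finset.sum_add_distrib,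
      ← Finset.sum_mul, Finset.sum_range_id, ← Nat.choose_two_right, Finset.sum_const,
      Finset.card_range, smul_eq_mul]
  obtain ⟨P, hP, hP0⟩ :=
    (Submodule.ne_bot_iff _).1 (LinearMap.ker_ne_bot_of_finrank_lt (f := Φ) hfinrank)
  refine ⟨P, hP0, fun s hs => ?_⟩
  simpa [Φ, L] using congrArg Subtype.val (congrFun (LinearMap.mem_ker.1 hP) ⟨s, hs⟩)

lemma exists_ne_zero_sum_gaugeTransform_pow_eq_zero {g : F[X]} {m E M : ℕ}
    (hg : g.natDegree ≤ m + 1) {I : Finset ι} {l : ι → F[X]} (hl : ∀ i ∈ I, (l i).natDegree ≤ m)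
    (hM : M * (E + 1) + M.choose 2 * m < I.card * (E + 1)) :
    ∃ P : ι → F[X], (∀ i ∈ I, (P i).natDegree ≤ E) ∧ (∃ i ∈ I, P i ≠ 0) ∧
      ∀ s < M, ∑ i ∈ I, (gaugeTransform (mkDerivation F g) (l i) ^ s) (P i) = 0 := by
  classical
  obtain ⟨P, hP0, hP⟩ := exists_ne_zero_sum_gaugeTransform_pow_eq_zero_of_fintype (ι := I) hg
    (fun i => hl i i.2) (by rwa [Fintype.card_coe])
  obtain ⟨i, hi⟩ := Function.ne_iff.1 hP0
  refine ⟨fun i => if h : i ∈ I then P ⟨i, h⟩ else 0, fun i hi => ?_, ⟨i, i.2, ?_⟩, fun s hs => ?_⟩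
  · simpa [hi] using mem_degreeLT_succ_iff.1 (P ⟨i, hi⟩).2
  · simpa using hi
  · rw [← Finset.sum_coe_sort]
    simpa using hP s hs

lemma X_sub_C_pow_dvd_of_eval_derivation_pow_eq_zero (p : ℕ) [Fact p.Prime] [CharP F p]
    {g f : F[X]} {x : F} (hx : g.eval x ≠ 0) {M : ℕ} (hM : M ≤ p)
    (h : ∀ s < M, (((mkDerivation F g : F[X] →ₗ[F] F[X]) ^ s) f).eval x = 0) :
    (X - C x) ^ M ∣ f := by
  induction M with
  | zero => simp
  | succ j ih =>
    obtain ⟨r, rfl⟩ := ih (by omega) fun s hs => h s (by omega)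
    have hval := eval_dvd (x := x) (dvd_derivation_pow_pow_mul_sub (mkDerivation F g) (X - C x) r j)
    rw [eval_sub, eval_sub, h j j.lt_succ_self] at hval
    have hfac : (j.factorial : F) ≠ 0 := by
      rw [Ne, CharP.cast_eq_zero_iff F p, (Fact.out : p.Prime).dvd_factorial]
      omega
    have hr : r.eval x = 0 := by simpa [mkDerivation_apply, hfac, hx] using hval
    rw [pow_succ]
    exact mul_dvd_mul_left _ (dvd_iff_isRoot.2 hr)

lemma eval_derivation_pow_sum_eq_zero {g : F[X]} {I : Finset ι} {l P U : ι → F[X]} {s : ℕ} {x : F}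
    (hU : ∀ i ∈ I, mkDerivation F g (U i) = l i * U i) (hUx : ∀ i ∈ I, (U i).eval x = 1)
    (hP : ∑ i ∈ I, (gaugeTransform (mkDerivation F g) (l i) ^ s) (P i) = 0) :
    (((mkDerivation F g : F[X] →ₗ[F] F[X]) ^ s) (∑ i ∈ I, P i * U i)).eval x = 0 := by
  rw [← eval_zero (x := x), ← hP, map_sum, eval_finsetSum, eval_finsetSum]
  refine Finset.sum_congr rfl fun i hi => ?_
  rw [derivation_pow_mul_eq_gaugeTransform_pow (hU i hi), eval_mul, hUx i hi, mul_one]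

lemma card_mul_le_natDegree {f : F[X]} (hf : f ≠ 0) {A : Finset F} {M : ℕ}
    (h : ∀ x ∈ A, (X - C x) ^ M ∣ f) : A.card * M ≤ f.natDegree := by
  have hprod : ∏ x ∈ A, (X - C x) ^ M ∣ f := by
    refine Finset.prod_dvd_of_coprime (fun x _ y _ hxy => ?_) h
    exact (isCoprime_X_sub_C_of_isUnit_sub (sub_ne_zero.2 hxy).isUnit).pow
  have hdeg := natDegree_le_of_dvd hprod hf
  rw [natDegree_prod _ _ fun x _ => pow_ne_zero M (X_sub_C_ne_zero x)] at hdeg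
  simpa using hdeg

/-- The functions `(X - c) ^ (k * e) * ∏ a ∈ S, (X - a) ^ k`, indexed by the pairs `(e, S)` and
balanced by a power of `(X - b) ^ k`, from which the auxiliary polynomial of Stepanov's method is
built with coefficients of low degree. -/
noncomputable def stepanovFactor (k d : ℕ) (b c : F) (x : ℕ × Finset F) : F[X] :=
  (X - C c) ^ (k * x.1) * balancedProd k b (fun S => d - (x.1 + S.card) % d) x.2

section stepanovFactor

variable {k d e : ℕ} {b c : F} {S T : Finset F}

lemma eval_stepanovFactor_eq_one (hd : 0 < d) {x ζ : F} (hζ : ζ ^ d = 1) (hb : (x - b) ^ k = ζ)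
    (hc : (x - c) ^ k = ζ) (hS : ∀ a ∈ S, (x - a) ^ k = ζ) :
    (stepanovFactor k d b c (e, S)).eval x = 1 := by
  have hdvd : d ∣ e + (S.card + (d - (e + S.card) % d)) := by
    have hmod := Nat.mod_lt (e + S.card) hd
    refine ⟨(e + S.card) / d + 1, ?_⟩
    rw [Nat.mul_succ, ← add_assoc]
    nth_rewrite 1 [← Nat.div_add_mod (e + S.card) d]
    omega
  obtain ⟨q, hq⟩ := hdvd
  rw [stepanovFactor, eval_mul, eval_balancedProd, Finset.prod_congr rfl hS, Finset.prod_const]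
  simp only [eval_pow, eval_sub, eval_X, eval_C, pow_mul, hb, hc]
  rw [← pow_add, ← pow_add, hq, pow_mul, hζ, one_pow]

lemma natDegree_stepanovFactor_le : (stepanovFactor k d b c (e, S)).natDegree ≤
    k * (e + S.card + d) := by
  refine natDegree_mul_le.trans ?_
  rw [natDegree_pow, natDegree_X_sub_C, mul_one, add_assoc, mul_add k e]
  exact Nat.add_le_add_left ((natDegree_balancedProd_le _ _ _ _).trans
    (Nat.mul_le_mul_left _ (Nat.add_le_add_left (Nat.sub_le _ _) _))) _

lemma logDerivDegLE_stepanovFactor {g : F[X]} (hg : g ≠ 0) {m : ℕ} (hgm : g.natDegree ≤ m + 1)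
    (hb : X - C b ∣ g) (hc : X - C c ∣ g) (hS : ∀ a ∈ S, X - C a ∣ g) :
    LogDerivDegLE g m (stepanovFactor k d b c (e, S)) :=
  ((LogDerivDegLE.of_dvd hg hgm hc).pow _).mul (logDerivDegLE_balancedProd hg hgm k _ hS hb)

lemma eq_zero_of_sum_mul_stepanovFactor_eq_zero {E R : ℕ} {P : ℕ × Finset F → F[X]}
    (hrigid : ∀ φ, RigidAt c k E T.powerset (balancedProd k b φ))
    (hP : ∀ x ∈ Finset.range R ×ˢ T.powerset, (P x).natDegree ≤ E)
    (hsum : ∑ x ∈ Finset.range R ×ˢ T.powerset, P x * stepanovFactor k d b c x = 0) :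
    ∀ x ∈ Finset.range R ×ˢ T.powerset, P x = 0 := by
  have hsep : (Finset.range R : Set ℕ).Pairwise fun e e' =>
      k * e + k ≤ k * e' ∨ k * e' + k ≤ k * e := by
    intro e _ e' _ hne
    simp only [← Nat.mul_succ]
    exact (lt_or_gt_of_ne hne).imp (Nat.mul_le_mul_left k) (Nat.mul_le_mul_left k)
  rintro ⟨e, S⟩ hx
  obtain ⟨he, hS⟩ := Finset.mem_product.1 hx
  refine eq_zero_of_sum_X_sub_C_pow_mul_eq_zero (P := fun e S => P (e, S)) hsep
    (fun e _ => hrigid fun S => d - (e + S.card) % d)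
    (fun e he S hS => hP (e, S) (Finset.mem_product.2 ⟨he, hS⟩)) ?_ e he S hS
  rw [← hsum, Finset.sum_product]
  refine Finset.sum_congr rfl fun e _ => ?_
  rw [Finset.mul_sum]
  exact Finset.sum_congr rfl fun S _ => mul_left_comm _ _ _

end stepanovFactor

theorem exists_X_sub_C_pow_dvd_of_pow_sub_eq (p : ℕ) [Fact p.Prime] [CharP F p] [DecidableEq F]
    {k d E M R : ℕ} (hd : 0 < d) (hkp : 2 * k ≤ p) {T : Finset F} {b c : F} (hc : c ∉ T)
    (hb : b ∉ insert c T)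
    (hk : 2 ^ T.card * (E + 1) + (2 ^ T.card).choose 2 * (T.card + 1) ≤ k) (hMp : M ≤ p)
    (hM : M * (E + 1) + M.choose 2 * (T.card + 1) < R * 2 ^ T.card * (E + 1)) :
    ∃ f : F[X], f ≠ 0 ∧ f.natDegree ≤ E + k * (R + T.card + d) ∧ ∀ x ζ : F, ζ ^ d = 1 →
      (∀ a ∈ insert b (insert c T), (x - a) ^ k = ζ) → (X - C x) ^ M ∣ f := by
  set g := Lagrange.nodal (insert b (insert c T)) id with hgdef
  have hg : g ≠ 0 := Lagrange.nodal_ne_zero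
  have hgm : g.natDegree ≤ T.card + 1 + 1 := by
    rw [hgdef, Lagrange.natDegree_nodal, Finset.card_insert_of_notMem hb,
      Finset.card_insert_of_notMem hc]
  obtain ⟨hgb, hgc, hgT⟩ : X - C b ∣ g ∧ X - C c ∣ g ∧ ∀ a ∈ T, X - C a ∣ g := by
    simpa only [Finset.forall_mem_insert, id_eq] using
      fun a (ha : a ∈ insert b (insert c T)) => Lagrange.X_sub_C_dvd_nodal id ha
  have hlog : ∀ y ∈ Finset.range R ×ˢ T.powerset,
      LogDerivDegLE g (T.card + 1) (stepanovFactor k d b c y) := fun y hy =>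
    logDerivDegLE_stepanovFactor hg hgm hgb hgc fun a ha =>
      hgT a (Finset.mem_powerset.1 (Finset.mem_product.1 hy).2 ha)
  choose! l hlm hl using hlog
  obtain ⟨P, hPE, ⟨y, hy, hPy⟩, hP⟩ := exists_ne_zero_sum_gaugeTransform_pow_eq_zero (E := E)
    (M := M) hgm hlm (by rwa [Finset.card_product, Finset.card_range, Finset.card_powerset])
  rw [Finset.mem_insert, not_or] at hb
  refine ⟨∑ y ∈ Finset.range R ×ˢ T.powerset, P y * stepanovFactor k d b c y, fun hf => ?_, ?_,
    fun x ζ hζ hx => ?_⟩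
  · exact hPy <| eq_zero_of_sum_mul_stepanovFactor_eq_zero
      (fun φ => (constIndep_powerset_balancedProd p hg hgm hkp hgb hgT hb.2 hk φ).rigidAt_powerset
        p hg hgm hgb hgT hc (Ne.symm hb.1) hk) hPE hf y hy
  · refine natDegree_sum_le_of_forall_le _ _ fun y hy => natDegree_mul_le.trans <|
      add_le_add (hPE y hy) <| natDegree_stepanovFactor_le.trans <| Nat.mul_le_mul_left k ?_
    obtain ⟨he, hS⟩ := Finset.mem_product.1 hy
    have := Finset.mem_range.1 he
    have := Finset.card_le_card (Finset.mem_powerset.1 hS)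
    omega
  · refine X_sub_C_pow_dvd_of_eval_derivation_pow_eq_zero p (g := g) ?_ hMp fun s hs =>
      eval_derivation_pow_sum_eq_zero hl (fun y hy => ?_) (hP s hs)
    · have hk0 : k ≠ 0 := by
        have : 0 < 2 ^ T.card * (E + 1) := by positivity
        omega
      rw [hgdef, Lagrange.eval_nodal, Finset.prod_ne_zero_iff]
      intro a ha
      have hone : (x - a) ^ (k * d) = 1 := by rw [pow_mul, hx a ha, hζ]
      exact (IsUnit.of_pow_eq_one hone (mul_ne_zero hk0 hd.ne')).ne_zero
    · simp only [Finset.forall_mem_insert] at hx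
      exact eval_stepanovFactor_eq_one hd hζ hx.1 hx.2.1 fun a ha =>
        hx.2.2 a (Finset.mem_powerset.1 (Finset.mem_product.1 hy).2 ha)

end Stepanov

section PowerRuns

open Polynomial

variable {p : ℕ} [Fact p.Prime] {k d u h : ℕ}

/-- The first terms of the runs of `h` consecutive nonzero residues modulo `p` that share their
`k`-th power. -/
def powRunStarts (p k h : ℕ) [Fact p.Prime] : Finset (ZMod p) :=
  {x | ∀ i < h, x + i ≠ 0 ∧ (x + i) ^ k = x ^ k}

lemma mem_powRunStarts {x : ZMod p} :
    x ∈ powRunStarts p k h ↔ ∀ i < h, x + i ≠ 0 ∧ (x + i) ^ k = x ^ k := by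
  simp only [powRunStarts, Finset.mem_filter_univ]

lemma card_powRunStarts_two_le (hk : k ≠ 0) : (powRunStarts p k 2).card ≤ k := by
  set f : (ZMod p)[X] := (X + C 1) ^ k - X ^ k with hf
  have hf0 : f ≠ 0 := fun h => by simpa [hf, hk] using congrArg (eval 0) h
  have hdeg : f.natDegree ≤ k := by
    refine (natDegree_sub_le _ _).trans ?_
    rw [natDegree_pow, natDegree_X_add_C, natDegree_X_pow, mul_one, max_self]
  refine (card_le_degree_of_subset_roots fun x hx => ?_).trans hdeg
  rw [Finset.mem_val, mem_powRunStarts] at hx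
  rw [mem_roots hf0, IsRoot.def, hf, eval_sub, eval_pow, eval_pow, eval_add, eval_X, eval_C,
    sub_eq_zero]
  exact_mod_cast (hx 1 one_lt_two).2

theorem card_powRunStarts_mul_le {E M R : ℕ} (hkd : k * d = p - 1) (hd : 2 ≤ d) (hup : u + 2 ≤ p)
    (hk : 2 ^ u * (E + 1) + (2 ^ u).choose 2 * (u + 1) ≤ k) (hMp : M ≤ p)
    (hM : M * (E + 1) + M.choose 2 * (u + 1) < R * 2 ^ u * (E + 1)) :
    (powRunStarts p k (u + 2)).card * M ≤ E + k * (R + u + d) := by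
  set a : ℕ → ZMod p := fun i => -(i : ZMod p) with ha
  have hinj : Set.InjOn a (Set.Iio p) :=
    neg_injective.comp_injOn (CharP.natCast_injOn_Iio (ZMod p) p)
  have hnew : ∀ m < u + 2, a m ∉ (Finset.range m).image a := by
    intro m hm hmem
    obtain ⟨i, hi, him⟩ := Finset.mem_image.1 hmem
    have := Finset.mem_range.1 hi
    exact this.ne (hinj (by grind) (by grind) him)
  have himage : insert (a (u + 1)) (insert (a u) ((Finset.range u).image a)) =
      (Finset.range (u + 2)).image a := by
    simp only [Finset.range_add_one, Finset.image_insert]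
  have hcard : ((Finset.range u).image a).card = u := by
    rw [Finset.card_image_of_injOn (hinj.mono fun i hi => by grind), Finset.card_range]
  have hkp : 2 * k ≤ p := by
    have := Nat.mul_le_mul_left k hd
    omega
  obtain ⟨f, hf, hdeg, hdvd⟩ := exists_X_sub_C_pow_dvd_of_pow_sub_eq p (E := E) (M := M) (R := R)
    (two_pos.trans_le hd) hkp (hnew u (by omega))
    (by simpa only [Finset.range_add_one, Finset.image_insert] using hnew (u + 1) (by omega))
    (by rwa [hcard]) hMp (by rwa [hcard])
  rw [hcard] at hdeg
  refine (card_mul_le_natDegree hf fun x hx => ?_).trans hdeg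
  rw [mem_powRunStarts] at hx
  refine hdvd x (x ^ k) ?_ fun b hb => ?_
  · rw [← pow_mul, hkd]
    exact ZMod.pow_card_sub_one_eq_one (by simpa using (hx 0 (by omega)).1)
  · rw [himage, Finset.mem_image] at hb
    obtain ⟨i, hi, rfl⟩ := hb
    rw [ha, sub_neg_eq_add]
    exact (hx i (Finset.mem_range.1 hi)).2

lemma exists_succ_mul_four_pow_le (hk : 1 ≤ k) :
    ∃ u, (u + 1) * 4 ^ u ≤ k ∧ k < (u + 2) * 4 ^ (u + 1) := by
  have hfin : ∃ u, k < (u + 2) * 4 ^ (u + 1) :=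
    ⟨k, by have := Nat.one_le_pow (k + 1) 4 (by norm_num); nlinarith⟩
  refine ⟨Nat.find hfin, ?_, Nat.find_spec hfin⟩
  rcases hu : Nat.find hfin with _ | u
  · simpa using hk
  · exact not_lt.1 (Nat.find_min hfin (hu ▸ u.lt_succ_self))

lemma two_pow_mul_div_add_choose_mul_le (h : (u + 1) * 4 ^ u ≤ k) :
    2 ^ u * (k / (2 * 2 ^ u)) + (2 ^ u).choose 2 * (u + 1) ≤ k := by
  have hdiv := Nat.div_mul_le_self k (2 * 2 ^ u)
  have hchoose : (2 ^ u).choose 2 * 2 ≤ 4 ^ u := by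
    rw [Nat.choose_two_right, show 4 ^ u = 2 ^ u * 2 ^ u from mul_pow 2 2 u]
    exact (Nat.div_mul_le_self _ _).trans (Nat.mul_le_mul_left _ (Nat.sub_le _ _))
  nlinarith

lemma div_mul_self_le (h : k < (u + 2) * 4 ^ (u + 1)) :
    k / (2 * 2 ^ u) * (k / (2 * 2 ^ u)) ≤ (u + 2) * k := by
  have hle : k / (2 * 2 ^ u) ≤ (u + 2) * (2 * 2 ^ u) := by
    refine Nat.div_le_of_le_mul (h.le.trans_eq ?_)
    rw [pow_succ, show 4 ^ u = 2 ^ u * 2 ^ u from mul_pow 2 2 u]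
    ring
  calc k / (2 * 2 ^ u) * (k / (2 * 2 ^ u))
      ≤ k / (2 * 2 ^ u) * ((u + 2) * (2 * 2 ^ u)) := Nat.mul_le_mul_left _ hle
    _ = (u + 2) * (k / (2 * 2 ^ u) * (2 * 2 ^ u)) := by ring
    _ ≤ (u + 2) * k := Nat.mul_le_mul_left _ (Nat.div_mul_le_self _ _)

lemma six_mul_mul_le {q D M : ℕ} (hu : 13 ≤ u) (hD : D * D ≤ (u + 2) * k) (hkq : 2 * k ≤ q)
    (hM : 2 * (M * M) ≤ q) : 6 * (M * D) ≤ (u + 1) * q := by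
  refine (Nat.pow_le_pow_iff_left two_ne_zero).1 ?_
  calc (6 * (M * D)) ^ 2 = 18 * (2 * (M * M)) * (D * D) := by ring
    _ ≤ 18 * q * ((u + 2) * k) := by gcongr
    _ = 9 * (u + 2) * q * (2 * k) := by ring
    _ ≤ (u + 1) ^ 2 * q * q := by gcongr; nlinarith
    _ = ((u + 1) * q) ^ 2 := by ring

lemma two_hundred_mul_two_pow_mul_le {q : ℕ} (hk : 40000 ≤ k) (hu : 4 ^ u ≤ k) (hkd : k * d ≤ q) :
    200 * (2 ^ u * d) ≤ q := by
  refine (Nat.pow_le_pow_iff_left two_ne_zero).1 ?_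
  calc (200 * (2 ^ u * d)) ^ 2 = 40000 * 4 ^ u * d ^ 2 := by
        rw [show 4 ^ u = 2 ^ u * 2 ^ u from mul_pow 2 2 u]; ring
    _ ≤ k * k * d ^ 2 := by gcongr
    _ = (k * d) ^ 2 := by ring
    _ ≤ q ^ 2 := by gcongr

lemma mul_add_choose_mul_lt {q M : ℕ} (hq : 10 ≤ q) (hu : 13 ≤ u) (hk : 40000 ≤ k)
    (h₁ : (u + 1) * 4 ^ u ≤ k) (h₂ : k < (u + 2) * 4 ^ (u + 1)) (hkd : k * d = q - 1)
    (hkq : 2 * k ≤ q) (hM : 2 * (M * M) ≤ q) :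
    M * (k / (2 * 2 ^ u)) + M.choose 2 * (u + 1) < d * (u + 1) * 2 ^ u * (k / (2 * 2 ^ u)) := by
  have hMD := six_mul_mul_le hu (div_mul_self_le h₂) hkq hM
  have hchoose : M.choose 2 * 2 ≤ M * M := by
    rw [Nat.choose_two_right]
    exact (Nat.div_mul_le_self _ _).trans (Nat.mul_le_mul_left _ (Nat.sub_le _ _))
  have hloss : 200 * (2 ^ u * d) ≤ q :=
    two_hundred_mul_two_pow_mul_le hk (by nlinarith) (hkd.trans_le (Nat.sub_le _ _))
  have hdiv : k ≤ k / (2 * 2 ^ u) * (2 * 2 ^ u) + 2 * 2 ^ u :=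
    (Nat.lt_div_mul_add (by positivity)).le
  have hmain : (q - 1) * (u + 1) ≤
      2 * (d * (u + 1) * 2 ^ u * (k / (2 * 2 ^ u))) + 2 * (2 ^ u * d) * (u + 1) := by
    rw [← hkd]
    calc k * d * (u + 1)
        ≤ (k / (2 * 2 ^ u) * (2 * 2 ^ u) + 2 * 2 ^ u) * d * (u + 1) := by gcongr
      _ = _ := by ring
  zify [(by omega : 1 ≤ q)] at *
  nlinarith

lemma card_powRunStarts_mul_sqrt_le (hu : 13 ≤ u) (h₁ : (u + 1) * 4 ^ u ≤ k)
    (h₂ : k < (u + 2) * 4 ^ (u + 1)) (hkd : k * d = p - 1) (hd : 2 ≤ d) :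
    2 * (powRunStarts p k (u + 2)).card * Nat.sqrt (p / 2) ≤ 3 * (u + 2) * p := by
  have hp : 0 < p := (Fact.out : p.Prime).pos
  have hkp : 2 * k ≤ p := by
    have := Nat.mul_le_mul_left k hd
    omega
  have h4u : 4 ^ 13 ≤ 4 ^ u := Nat.pow_le_pow_right (by norm_num) hu
  have hk : 14 * 4 ^ u ≤ k := (Nat.mul_le_mul_right _ (by omega)).trans h₁
  have hM : Nat.sqrt (p / 2) * Nat.sqrt (p / 2) ≤ p / 2 := Nat.sqrt_le _
  have hD : k / (2 * 2 ^ u) - 1 + 1 = k / (2 * 2 ^ u) := by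
    refine Nat.sub_add_cancel (Nat.div_pos (le_trans ?_ hk) (by positivity))
    gcongr <;> norm_num
  have hup : u + 2 ≤ p := by
    have := Nat.lt_pow_self (n := u) (a := 4) (by norm_num)
    omega
  have hcard := card_powRunStarts_mul_le (M := Nat.sqrt (p / 2)) (R := d * (u + 1)) hkd hd hup
    (by rw [hD]; exact two_pow_mul_div_add_choose_mul_le h₁)
    ((Nat.sqrt_le_self _).trans (Nat.div_le_self _ _))
    (by rw [hD]; exact mul_add_choose_mul_lt (q := p) (by omega) hu (by omega) h₁ h₂ hkd hkp
          (by omega))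
  have hDk : k / (2 * 2 ^ u) ≤ k := Nat.div_le_self _ _
  have hR : k * (d * (u + 1) + u + d) = (p - 1) * (u + 2) + k * u := by
    rw [← hkd]; ring
  have hpu : (p - 1) * (u + 2) ≤ p * (u + 2) := Nat.mul_le_mul_right _ (Nat.sub_le _ _)
  have hku : 2 * k * u ≤ p * u := Nat.mul_le_mul_right _ hkp
  rw [hR] at hcard
  nlinarith

lemma forty_three_le_log {x : ℝ} (hx : 10 ^ 19 ≤ x) : 43 ≤ Real.log x := by
  have hpow : (2 : ℝ) ^ 63 ≤ x := le_trans (by norm_num) hx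
  have hlog := Real.log_le_log (by positivity) hpow
  rw [Real.log_pow] at hlog
  have := Real.log_two_gt_d9
  push_cast at hlog
  linarith

lemma le_log_of_four_pow_le {n : ℕ} {x : ℝ} (h : 4 ^ n ≤ x) : n ≤ 0.722 * Real.log x := by
  have hlog := Real.log_le_log (by positivity) h
  rw [Real.log_pow, show (4 : ℝ) = 2 ^ 2 by norm_num, Real.log_pow] at hlog
  have := Real.log_two_gt_d9
  have : (0 : ℝ) ≤ n := n.cast_nonneg
  push_cast at hlog
  nlinarith

lemma mul_sqrt_le_sqrt_half {n : ℕ} (hn : 10 ^ 6 ≤ n) : 0.7 * √n ≤ Nat.sqrt (n / 2) := by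
  have hlt : n < 2 * (Nat.sqrt (n / 2) + 1) ^ 2 := by
    have := Nat.lt_succ_sqrt (n / 2)
    rw [Nat.succ_eq_add_one, ← sq] at this
    omega
  have hltR : (n : ℝ) < 2 * (Nat.sqrt (n / 2) + 1) ^ 2 := by exact_mod_cast hlt
  have hsq : √(n : ℝ) ^ 2 = n := Real.sq_sqrt n.cast_nonneg
  have hlarge : (10 : ℝ) ^ 3 ≤ √n := by
    refine Real.le_sqrt_of_sq_le ?_
    have : (10 : ℝ) ^ 6 ≤ n := by exact_mod_cast hn
    linarith
  by_contra! h
  nlinarith [Nat.cast_nonneg (α := ℝ) (Nat.sqrt (n / 2))]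

lemma card_powRunStarts_le_mul_sqrt (hu : 13 ≤ u) (h₁ : (u + 1) * 4 ^ u ≤ k)
    (h₂ : k < (u + 2) * 4 ^ (u + 1)) (hkd : k * d = p - 1) (hd : 2 ≤ d) :
    (powRunStarts p k (u + 2)).card ≤ 2.15 * (u + 2 : ℕ) * √p := by
  have hp : (0 : ℝ) < p := by exact_mod_cast (Fact.out : p.Prime).pos
  have hlarge : 10 ^ 6 ≤ p := by
    have := Nat.mul_le_mul_left k hd
    have : 4 ^ 13 ≤ 4 ^ u := Nat.pow_le_pow_right (by norm_num) hu
    nlinarith [Nat.sub_le p 1]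
  refine le_of_mul_le_mul_right ?_ (by positivity : 0 < 1.4 * √(p : ℝ))
  calc ((powRunStarts p k (u + 2)).card : ℝ) * (1.4 * √p)
      = 2 * (powRunStarts p k (u + 2)).card * (0.7 * √p) := by ring
    _ ≤ 2 * (powRunStarts p k (u + 2)).card * Nat.sqrt (p / 2) := by
        gcongr
        exact mul_sqrt_le_sqrt_half hlarge
    _ ≤ 3 * (u + 2 : ℕ) * p := by exact_mod_cast card_powRunStarts_mul_sqrt_le hu h₁ h₂ hkd hd
    _ = 3 * (u + 2 : ℕ) * (√p * √p) := by rw [Real.mul_self_sqrt hp.le]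
    _ ≤ 2.15 * (u + 2 : ℕ) * √p * (1.4 * √p) := by
        have : 0 ≤ ((u + 2 : ℕ) : ℝ) * (√p * √p) := by positivity
        linarith

theorem exists_card_powRunStarts_le (hp : 10 ^ 19 ≤ p) (hkd : k * d = p - 1) (hd : 2 ≤ d) :
    ∃ h : ℕ, 0 < h ∧ h ≤ 0.722 * Real.log p ∧
      (powRunStarts p k h).card ≤ 1.56 * Real.log p * √p := by
  have hpR : (10 : ℝ) ^ 19 ≤ p := by exact_mod_cast hp
  have hlog := forty_three_le_log hpR
  have hk : k ≠ 0 := by rintro rfl; omega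
  rcases lt_or_ge (k * k) p with hkp | hkp
  · refine ⟨2, two_pos, by norm_num; linarith, ?_⟩
    have hcard : ((powRunStarts p k 2).card : ℝ) ≤ √p := by
      refine Real.le_sqrt_of_sq_le ?_
      have := card_powRunStarts_two_le (p := p) hk
      exact_mod_cast (by nlinarith : (powRunStarts p k 2).card ^ 2 ≤ p)
    nlinarith
  · obtain ⟨u, h₁, h₂⟩ := exists_succ_mul_four_pow_le (Nat.one_le_iff_ne_zero.2 hk)
    have hu : 13 ≤ u := by
      by_contra! hu
      have : (u + 2) * 4 ^ (u + 1) ≤ 14 * 4 ^ 13 :=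
        Nat.mul_le_mul (by omega) (Nat.pow_le_pow_right (by norm_num) (by omega))
      nlinarith
    have hpow : 4 ^ (u + 2) ≤ p := by
      have := Nat.mul_le_mul_left k hd
      have : 14 * 4 ^ u ≤ (u + 1) * 4 ^ u := Nat.mul_le_mul_right _ (by omega)
      rw [pow_add]
      omega
    have hulog : ((u + 2 : ℕ) : ℝ) ≤ 0.722 * Real.log p :=
      le_log_of_four_pow_le (by exact_mod_cast hpow)
    refine ⟨u + 2, by omega, hulog, ?_⟩
    have : 2.15 * ((u + 2 : ℕ) : ℝ) ≤ 1.56 * Real.log p := by linarith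
    exact (card_powRunStarts_le_mul_sqrt hu h₁ h₂ hkd hd).trans (by gcongr)

end PowerRuns

section Dilation

/-- The pairs `(q, t)` of natural numbers with `t < q ≤ n`. -/
def triangle (n : ℕ) : Finset (Σ _ : ℕ, ℕ) := (Finset.range (n + 1)).sigma Finset.range

lemma mem_triangle {n : ℕ} {x : Σ _ : ℕ, ℕ} : x ∈ triangle n ↔ x.1 ≤ n ∧ x.2 < x.1 := by
  simp only [triangle, Finset.mem_sigma, Finset.mem_range, Nat.lt_succ_iff]

lemma card_triangle_mul_two (n : ℕ) : (triangle n).card * 2 = (n + 1) * n := by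
  simp only [triangle, Finset.card_sigma, Finset.card_range]
  exact Finset.sum_range_id_mul_two (n + 1)

/-- The pairs `(q, t)` with `t < q ≤ n` and `q` coprime to `a + b * t`. For `a / b` close to
`N / p` the fractions `(N + t * p) / q` with `(q, t)` of this kind are well separated. -/
def coprimePairs (a b : ℤ) (n : ℕ) : Finset (Σ _ : ℕ, ℕ) :=
  {x ∈ triangle n | IsCoprime (a + b * x.2) (x.1 : ℤ)}

lemma card_filter_prime_dvd_le {a b : ℤ} {l : ℕ} (n : ℕ) (hl : l.Prime) (hlb : ¬ (l : ℤ) ∣ b) :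
    {x ∈ triangle n | l ∣ x.1 ∧ (l : ℤ) ∣ a + b * x.2}.card ≤ (triangle (n / l)).card := by
  refine Finset.card_le_card_of_injOn (fun x => ⟨x.1 / l, x.2 / l⟩) ?_ ?_
  · intro x hx
    obtain ⟨hx, hlx, -⟩ := Finset.mem_filter.1 hx
    obtain ⟨hxn, hlt⟩ := mem_triangle.1 hx
    refine mem_triangle.2 ⟨Nat.div_le_div_right hxn, ?_⟩
    rwa [Nat.div_lt_iff_lt_mul hl.pos, Nat.div_mul_cancel hlx]
  · rintro ⟨q, t⟩ hx ⟨q', t'⟩ hx' heq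
    obtain ⟨-, hlq, hlt⟩ := Finset.mem_filter.1 hx
    obtain ⟨-, hlq', hlt'⟩ := Finset.mem_filter.1 hx'
    simp only [Sigma.mk.injEq, heq_eq_eq] at heq
    obtain rfl : q = q' := (Nat.div_left_inj hlq hlq').1 heq.1
    have hmul : (l : ℤ) ∣ b * (t - t') := by
      have := dvd_sub hlt hlt'
      rwa [add_sub_add_left_eq_sub, ← mul_sub] at this
    have hmod : t' ≡ t [MOD l] :=
      Nat.modEq_iff_dvd.2 ((Int.Prime.dvd_mul' hl hmul).resolve_left hlb)
    obtain rfl : t = t' := by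
      rw [← Nat.div_add_mod t l, ← Nat.div_add_mod t' l, heq.2, hmod]
    rfl

lemma card_triangle_le_card_coprimePairs_add {a b : ℤ} (hab : IsCoprime a b) (n : ℕ) :
    (triangle n).card ≤
      (coprimePairs a b n).card + ∑ l ∈ Finset.Ioc 1 n, (triangle (n / l)).card := by
  classical
  set s : Finset ℕ := {l ∈ Finset.Ioc 1 n | l.Prime ∧ ¬ (l : ℤ) ∣ b} with hs
  set B : ℕ → Finset (Σ _ : ℕ, ℕ) := fun l =>
    {x ∈ triangle n | l ∣ x.1 ∧ (l : ℤ) ∣ a + b * x.2} with hB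
  have hsub : triangle n ⊆ coprimePairs a b n ∪ s.biUnion B := by
    intro x hx
    rw [Finset.mem_union, or_iff_not_imp_left, coprimePairs, Finset.mem_filter, not_and]
    intro hnot
    obtain ⟨l, hl, hlgcd⟩ := Nat.exists_prime_and_dvd (mt Int.isCoprime_iff_gcd_eq_one.2 (hnot hx))
    obtain ⟨hlt, hlq⟩ := Int.dvd_coe_gcd_iff.1 (Int.natCast_dvd_natCast.2 hlgcd)
    rw [Int.natCast_dvd_natCast] at hlq
    obtain ⟨hxn, hlt'⟩ := mem_triangle.1 hx
    have hlb : ¬ (l : ℤ) ∣ b := fun hlb => (Nat.prime_iff_prime_int.1 hl).not_isUnit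
      (hab.isUnit_of_dvd' ((dvd_add_left (hlb.mul_right _)).1 hlt) hlb)
    exact Finset.mem_biUnion.2 ⟨l, Finset.mem_filter.2 ⟨Finset.mem_Ioc.2
      ⟨hl.one_lt, (Nat.le_of_dvd (by omega) hlq).trans hxn⟩, hl, hlb⟩,
      Finset.mem_filter.2 ⟨hx, hlq, hlt⟩⟩
  calc (triangle n).card
      ≤ (coprimePairs a b n).card + (s.biUnion B).card :=
        (Finset.card_le_card hsub).trans (Finset.card_union_le _ _)
    _ ≤ (coprimePairs a b n).card + ∑ l ∈ s, (B l).card := by gcongr; exact Finset.card_biUnion_le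
    _ ≤ (coprimePairs a b n).card + ∑ l ∈ s, (triangle (n / l)).card := by
        refine Nat.add_le_add_left (Finset.sum_le_sum fun l hl => ?_) _
        obtain ⟨-, hprime, hlb⟩ := Finset.mem_filter.1 hl
        exact card_filter_prime_dvd_le n hprime hlb
    _ ≤ _ := by gcongr; exact Finset.filter_subset _ _

lemma sum_Ioc_one_inv_sq_le {n : ℕ} (hn : 3 ≤ n) :
    ∑ l ∈ Finset.Ioc 1 n, ((l : ℝ) ^ 2)⁻¹ ≤ 25 / 36 := by
  have htail := sum_Ioc_inv_sq_le_sub (α := ℝ) three_ne_zero hn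
  have hn0 : (0 : ℝ) ≤ (n : ℝ)⁻¹ := by positivity
  have hhead : ∑ l ∈ Finset.Ioc (1 : ℕ) 3, ((l : ℝ) ^ 2)⁻¹ = 13 / 36 := by
    rw [show Finset.Ioc (1 : ℕ) 3 = {2, 3} from rfl, Finset.sum_pair (by norm_num)]
    norm_num
  rw [← Finset.sum_Ioc_consecutive _ (by norm_num : 1 ≤ 3) hn, hhead]
  push_cast at htail
  linarith

lemma card_triangle_div_le (n l : ℕ) :
    ((triangle (n / l)).card : ℝ) ≤ 0.5075 * (n : ℝ) ^ 2 * ((l : ℝ) ^ 2)⁻¹ + 8.5 := by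
  have hcard : ((triangle (n / l)).card : ℝ) * 2 = ((n / l : ℕ) + 1) * (n / l : ℕ) := by
    exact_mod_cast card_triangle_mul_two (n / l)
  have hle : ((n / l : ℕ) : ℝ) ^ 2 ≤ (n / l : ℝ) ^ 2 := by gcongr; exact Nat.cast_div_le
  rw [mul_assoc, ← div_eq_mul_inv, ← div_pow]
  nlinarith [sq_nonneg (((n / l : ℕ) : ℝ) - 33)]

lemma mul_sq_le_card_coprimePairs {a b : ℤ} (hab : IsCoprime a b) {n : ℕ} (hn : 5000 ≤ n) :
    0.145 * (n : ℝ) ^ 2 ≤ (coprimePairs a b n).card := by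
  have hcard : ((triangle n).card : ℝ) * 2 = (n + 1) * n := by
    exact_mod_cast card_triangle_mul_two n
  have hle : ((triangle n).card : ℝ) ≤
      (coprimePairs a b n).card + ∑ l ∈ Finset.Ioc 1 n, ((triangle (n / l)).card : ℝ) := by
    exact_mod_cast card_triangle_le_card_coprimePairs_add hab n
  have hsum : ∑ l ∈ Finset.Ioc 1 n, ((triangle (n / l)).card : ℝ) ≤
      0.5075 * (n : ℝ) ^ 2 * (25 / 36) + 8.5 * n := by
    refine (Finset.sum_le_sum fun l _ => card_triangle_div_le n l).trans ?_
    rw [Finset.sum_add_distrib, ← Finset.mul_sum, Finset.sum_const, Nat.card_Ioc, nsmul_eq_mul,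
      mul_comm _ (8.5 : ℝ)]
    gcongr
    · exact sum_Ioc_one_inv_sq_le (by omega)
    · exact Nat.sub_le _ _
  have hnR : (5000 : ℝ) ≤ n := by exact_mod_cast hn
  nlinarith

lemma exists_isCoprime_abs_mul_sub_mul_le (x : ℤ) {p n : ℕ} (hp : 0 < p) (hn : 0 < n) :
    ∃ a b : ℤ, 0 < b ∧ b ≤ n ∧ IsCoprime a b ∧ |b * x - a * p| * (n + 1) ≤ p := by
  obtain ⟨s, hs, hsn⟩ := Real.exists_rat_abs_sub_le_and_den_le ((x : ℝ) / p) hn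
  have hpR : (0 : ℝ) < p := by exact_mod_cast hp
  have hden : (0 : ℝ) < s.den := by exact_mod_cast s.den_pos
  refine ⟨s.num, s.den, by exact_mod_cast s.den_pos, by exact_mod_cast hsn,
    Int.isCoprime_iff_nat_coprime.2 (by simpa using s.reduced), ?_⟩
  have hsub : (x : ℝ) / p - s = (s.den * x - s.num * p) / (p * s.den) := by
    rw [Rat.cast_def]
    field_simp
  rw [hsub, abs_div, abs_of_pos (mul_pos hpR hden), div_le_div_iff₀ (by positivity) (by positivity),
    one_mul, ← mul_assoc] at hs
  exact_mod_cast le_of_mul_le_mul_right hs hden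

lemma mul_eq_mul_of_mul_eq_add {p N a b Q H q q' t t' r r' y : ℤ} (hb : 0 < b) (hbQ : b ≤ 2 * Q)
    (hab : |b * N - a * p| * (2 * Q + 1) ≤ p) (hH : 4 * H * Q ^ 2 ≤ p) (hq : q ∈ Set.Icc 1 Q)
    (hq' : q' ∈ Set.Icc 1 Q) (hr : r ∈ Set.Icc 1 H) (hr' : r' ∈ Set.Icc 1 H)
    (h : q * y = N + t * p + r) (h' : q' * y = N + t' * p + r') :
    (a + b * t) * q' = (a + b * t') * q := by
  obtain ⟨hq1, hqQ⟩ := hq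
  obtain ⟨hq1', hqQ'⟩ := hq'
  obtain ⟨hr1, hrH⟩ := hr
  obtain ⟨hr1', hrH'⟩ := hr'
  have hdiff : p * ((a + b * t) * q' - (a + b * t') * q) =
      b * (q * r' - q' * r) - (b * N - a * p) * (q' - q) := by
    linear_combination b * q * h' - b * q' * h
  have hcross : |q * r' - q' * r| ≤ Q * H - 1 := by
    have : q * r' ≤ Q * H := by gcongr; omega
    have : q' * r ≤ Q * H := by gcongr; omega
    rw [abs_le]
    constructor <;> nlinarith
  have hmain : 2 * |b * (q * r' - q' * r)| < p := by
    rw [abs_mul, abs_of_pos hb]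
    have : b * |q * r' - q' * r| ≤ 2 * Q * (Q * H - 1) := by gcongr; omega
    nlinarith
  have herror : 2 * |(b * N - a * p) * (q' - q)| ≤ p := by
    have : |q' - q| ≤ Q := by rw [abs_le]; constructor <;> linarith
    rw [abs_mul]
    nlinarith [abs_nonneg (b * N - a * p)]
  have hzero : p * ((a + b * t) * q' - (a + b * t') * q) = 0 := by
    refine Int.eq_zero_of_abs_lt_dvd (dvd_mul_right p _) ?_
    rw [hdiff]
    linarith [abs_sub (b * (q * r' - q' * r)) ((b * N - a * p) * (q' - q))]
  have hp : p ≠ 0 := by nlinarith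
  exact sub_eq_zero.1 ((mul_eq_zero.1 hzero).resolve_left hp)

lemma eq_and_eq_of_mul_eq_mul_of_isCoprime {a b q q' t t' : ℤ} (hb : b ≠ 0) (hq : 0 < q)
    (hq' : 0 < q') (hc : IsCoprime (a + b * t) q) (hc' : IsCoprime (a + b * t') q')
    (h : (a + b * t) * q' = (a + b * t') * q) : q = q' ∧ t = t' := by
  obtain rfl : q = q' := Int.dvd_antisymm hq.le hq'.le
    (hc.symm.dvd_of_dvd_mul_left (h ▸ dvd_mul_left q _))
    (hc'.symm.dvd_of_dvd_mul_left (h ▸ dvd_mul_left q' _))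
  exact ⟨rfl, mul_left_cancel₀ hb (add_left_cancel (mul_right_cancel₀ hq.ne' h))⟩

/-- The `j`-th integer after `(N + t * p) / q`, counting from `0`; its multiple by `q` exceeds `N`
only a little modulo `p`. -/
def dilationPoint (p : ℕ) (N : ℤ) (q t j : ℕ) : ℤ := (N + t * p) / q + (j + 1)

lemma exists_mul_dilationPoint_add_eq (p : ℕ) (N : ℤ) {q : ℕ} (hq : 0 < q) (t j i : ℕ) :
    ∃ r : ℕ, 1 ≤ r ∧ r ≤ q * (j + 1 + i) ∧
      q * (dilationPoint p N q t j + i) = N + t * p + r := by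
  have hdiv := Int.mul_ediv_add_emod (N + t * p) q
  have hmod := Int.emod_nonneg (N + t * p) (by omega : (q : ℤ) ≠ 0)
  have hmod' := Int.emod_lt_of_pos (N + t * p) (by omega : (0 : ℤ) < q)
  obtain ⟨m, hm⟩ := Int.eq_ofNat_of_zero_le hmod
  rw [hm] at hdiv hmod'
  have hle : q ≤ q * (j + 1 + i) := Nat.le_mul_of_pos_right _ (by omega)
  refine ⟨q * (j + 1 + i) - m, by omega, Nat.sub_le _ _, ?_⟩
  rw [Nat.cast_sub (by omega), dilationPoint]
  push_cast
  linear_combination hdiv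

lemma injOn_dilationPoint {p : ℕ} {N a b : ℤ} {Q w : ℕ} (hb : 0 < b) (hbQ : b ≤ 2 * Q)
    (hab : |b * N - a * p| * (2 * Q + 1) ≤ p) (hQp : 4 * (Q * w) * Q ^ 2 ≤ p) :
    Set.InjOn (fun z : (Σ _ : ℕ, ℕ) × ℕ => (dilationPoint p N z.1.1 z.1.2 z.2 : ZMod p))
      (coprimePairs a b Q ×ˢ Finset.range w : Finset _) := by
  rintro ⟨⟨q, t⟩, j⟩ hz ⟨⟨q', t'⟩, j'⟩ hz' heq
  simp only [Finset.coe_product, Set.mem_prod, Finset.mem_coe, Finset.mem_range, coprimePairs,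
    Finset.mem_filter, mem_triangle] at hz hz' heq
  obtain ⟨⟨⟨hqQ, htq⟩, hc⟩, hj⟩ := hz
  obtain ⟨⟨⟨hqQ', htq'⟩, hc'⟩, hj'⟩ := hz'
  obtain ⟨r, hr1, hr, hry⟩ := exists_mul_dilationPoint_add_eq p N (pos_of_gt htq) t j 0
  obtain ⟨r', hr1', hr', hry'⟩ := exists_mul_dilationPoint_add_eq p N (pos_of_gt htq') t' j' 0
  obtain ⟨v, hv⟩ := (ZMod.intCast_eq_intCast_iff_dvd_sub _ _ _).1 heq
  have hrH : r ≤ Q * w := hr.trans (Nat.mul_le_mul hqQ hj)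
  have hrH' : r' ≤ Q * w := hr'.trans (Nat.mul_le_mul hqQ' hj')
  have hcross := mul_eq_mul_of_mul_eq_add (H := (Q * w : ℕ)) (q := q) (q' := q') (r := r) (r' := r')
    (t' := t' - q' * v) hb hbQ hab (by exact_mod_cast hQp) ⟨by omega, by omega⟩
    ⟨by omega, by omega⟩ ⟨by omega, by omega⟩ ⟨by omega, by omega⟩ hry
    (by linear_combination hry' - q' * hv)
  have hc'' : IsCoprime (a + b * (t' - q' * v)) (q' : ℤ) := by
    rw [show a + b * (t' - q' * v) = a + b * t' + q' * (-(b * v)) by ring]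
    exact hc'.add_mul_left_left _
  obtain ⟨hqq, htt⟩ := eq_and_eq_of_mul_eq_mul_of_isCoprime hb.ne' (by omega) (by omega) hc hc''
    hcross
  obtain rfl : q = q' := by exact_mod_cast hqq
  have hqv : (q : ℤ) * v = 0 := by
    refine Int.eq_zero_of_abs_lt_dvd (dvd_mul_right _ v) ?_
    rw [abs_lt]
    constructor <;> linarith
  obtain rfl : t = t' := by omega
  obtain rfl : v = 0 := (mul_eq_zero.1 hqv).resolve_left (by omega)
  obtain rfl : j = j' := by
    simp only [dilationPoint] at hv
    omega
  rfl

theorem exists_card_ge_forall_mul_mem {p : ℕ} (N : ℤ) {Q h w : ℕ} (hQ : 5000 ≤ Q) (hp : 0 < p)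
    (hQp : 4 * (Q * (w + h)) * Q ^ 2 ≤ p) :
    ∃ A : Finset (ZMod p), 0.145 * (Q : ℝ) ^ 2 * w ≤ A.card ∧ ∀ x ∈ A, ∃ q : ℕ, 1 ≤ q ∧ q ≤ Q ∧
      ∀ i < h, ∃ r : ℕ, 1 ≤ r ∧ r ≤ Q * (w + h) ∧ (q : ZMod p) * (x + i) = (N + r : ℤ) := by
  obtain ⟨a, b, hb, hbQ, hab, habN⟩ :=
    exists_isCoprime_abs_mul_sub_mul_le N hp (by omega : 0 < 2 * Q)
  push_cast at hbQ habN
  have hinj := injOn_dilationPoint (w := w) hb hbQ habN (le_trans (by gcongr; omega) hQp)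
  refine ⟨(coprimePairs a b Q ×ˢ Finset.range w).image fun z =>
    (dilationPoint p N z.1.1 z.1.2 z.2 : ZMod p), ?_, ?_⟩
  · rw [Finset.card_image_of_injOn hinj, Finset.card_product, Finset.card_range, Nat.cast_mul]
    gcongr
    exact mul_sq_le_card_coprimePairs hab hQ
  · simp only [Finset.forall_mem_image, Prod.forall, Sigma.forall, Finset.mem_product,
      Finset.mem_range, coprimePairs, Finset.mem_filter, mem_triangle]
    rintro q t j ⟨⟨⟨hqQ, htq⟩, -⟩, hj⟩
    refine ⟨q, by omega, hqQ, fun i hi => ?_⟩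
    obtain ⟨r, hr1, hr, hry⟩ := exists_mul_dilationPoint_add_eq p N (pos_of_gt htq) t j i
    refine ⟨r, hr1, hr.trans (Nat.mul_le_mul hqQ (by omega)), ?_⟩
    have := congrArg (Int.cast : ℤ → ZMod p) hry
    push_cast at this ⊢
    rwa [ZMod.natCast_self, mul_zero, add_zero] at this

end Dilation

section Characters

lemma exists_pow_eq_pow_of_mulChar_eq {K R : Type*} [Field K] [Finite K] [CommMonoidWithZero R]
    {χ : MulChar K R} (hχ : χ ≠ 1) :
    ∃ k d : ℕ, k * d = Nat.card K - 1 ∧ 2 ≤ d ∧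
      ∀ α β : K, α ≠ 0 → β ≠ 0 → χ α = χ β → α ^ k = β ^ k := by
  set G := χ.toUnitHom.ker with hG
  have hker : G ≠ ⊤ := fun htop => hχ <| MulChar.ext fun a => by
    have ha : a ∈ χ.toUnitHom.ker := by rw [← hG, htop]; exact Subgroup.mem_top a
    rw [← MulChar.coe_toUnitHom, MonoidHom.mem_ker.1 ha, Units.val_one, MulChar.one_apply_coe]
  refine ⟨Nat.card G, G.index, ?_, Subgroup.one_lt_index_of_ne_top hker,
    fun α β hα hβ hαβ => ?_⟩
  · rw [Subgroup.card_mul_index, Nat.card_units]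
  · have hmem : Units.mk0 α hα / Units.mk0 β hβ ∈ G := by
      rw [hG, MonoidHom.mem_ker, map_div, div_eq_one, Units.ext_iff, MulChar.coe_toUnitHom,
        MulChar.coe_toUnitHom]
      exact hαβ
    have hpow := congrArg Subtype.val (pow_card_eq_one' (x := (⟨_, hmem⟩ : G)))
    rw [Subgroup.coe_pow, div_pow, Subgroup.coe_one, div_eq_one, Units.ext_iff] at hpow
    simpa only [Units.val_pow_eq_pow_val, Units.val_mk0] using hpow

variable {p : ℕ} [Fact p.Prime] {R : Type*} [CommMonoidWithZero R] {χ : DirichletCharacter R p}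
  {N : ℤ} {H : ℕ}

lemma apply_ne_zero_of_forall_apply_eq [Nontrivial R] (hH : 2 ≤ H)
    (hconst : ∀ i : ℕ, 1 ≤ i → i ≤ H → χ ((N + i : ℤ) : ZMod p) = χ ((N + 1 : ℤ) : ZMod p)) :
    χ ((N + 1 : ℤ) : ZMod p) ≠ 0 := by
  have hzero {x : ZMod p} (hx : χ x = 0) : x = 0 :=
    not_not.1 fun hx0 => ((IsUnit.mk0 x hx0).map χ).ne_zero hx
  intro h1
  have h2 := hzero ((hconst 2 one_le_two hH).trans h1)
  have h1 := hzero h1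
  push_cast at h1 h2
  exact one_ne_zero (α := ZMod p) (by linear_combination h2 - h1)

lemma mem_powRunStarts_of_forall_mul_mem {k h : ℕ}
    (hpow : ∀ α β : ZMod p, α ≠ 0 → β ≠ 0 → χ α = χ β → α ^ k = β ^ k)
    (hconst : ∀ i : ℕ, 1 ≤ i → i ≤ H → χ ((N + i : ℤ) : ZMod p) = χ ((N + 1 : ℤ) : ZMod p))
    (hne : χ ((N + 1 : ℤ) : ZMod p) ≠ 0) {q x : ZMod p} (hq : q ≠ 0)
    (hx : ∀ i < h, ∃ r : ℕ, 1 ≤ r ∧ r ≤ H ∧ q * (x + i) = (N + r : ℤ)) :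
    x ∈ powRunStarts p k h := by
  have hval : ∀ i < h, χ (q * (x + i)) = χ ((N + 1 : ℤ) : ZMod p) := by
    intro i hi
    obtain ⟨r, hr1, hr, hqx⟩ := hx i hi
    rw [hqx, hconst r hr1 hr]
  have hx0 : ∀ i < h, x + i ≠ 0 := by
    intro i hi h0
    refine hne ?_
    rw [← hval i hi, h0, mul_zero, MulChar.map_zero]
  rw [mem_powRunStarts]
  intro i hi
  have hpos := i.zero_le.trans_lt hi
  refine ⟨hx0 i hi, hpow _ _ (hx0 i hi) (by simpa using hx0 0 hpos) ?_⟩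
  have hχq : IsUnit (χ q) := (IsUnit.mk0 q hq).map χ
  refine hχq.mul_left_cancel ?_
  rw [← map_mul, ← map_mul, hval i hi, ← hval 0 hpos, Nat.cast_zero, add_zero]

lemma mul_sq_mul_le_card_powRunStarts {k h Q w : ℕ}
    (hpow : ∀ α β : ZMod p, α ≠ 0 → β ≠ 0 → χ α = χ β → α ^ k = β ^ k)
    (hconst : ∀ i : ℕ, 1 ≤ i → i ≤ H → χ ((N + i : ℤ) : ZMod p) = χ ((N + 1 : ℤ) : ZMod p))
    (hne : χ ((N + 1 : ℤ) : ZMod p) ≠ 0) (hh : 0 < h) (hQ : 5000 ≤ Q) (hQH : Q * (w + h) ≤ H)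
    (hQp : 4 * (Q * (w + h)) * Q ^ 2 ≤ p) :
    0.145 * (Q : ℝ) ^ 2 * w ≤ (powRunStarts p k h).card := by
  obtain ⟨A, hA, hAmul⟩ := exists_card_ge_forall_mul_mem N hQ (Fact.out : p.Prime).pos hQp
  have hQltp : Q < p := by
    calc Q < 4 * (Q * 1) * 1 ^ 2 := by omega
      _ ≤ 4 * (Q * (w + h)) * Q ^ 2 := by gcongr <;> omega
      _ ≤ p := hQp
  refine hA.trans <| Nat.cast_le.2 <| Finset.card_le_card fun x hx => ?_
  obtain ⟨q, hq1, hqQ, hrun⟩ := hAmul x hx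
  have hq : (q : ZMod p) ≠ 0 := by
    rw [Ne, ZMod.natCast_eq_zero_iff]
    exact Nat.not_dvd_of_pos_of_lt hq1 (hqQ.trans_lt hQltp)
  refine mem_powRunStarts_of_forall_mul_mem hpow hconst hne hq fun i hi => ?_
  obtain ⟨r, hr1, hr, hqx⟩ := hrun i hi
  exact ⟨r, hr1, hr.trans hQH, hqx⟩

end Characters

section Numerics

lemma mul_log_le_self {y : ℝ} (hy : 50000 ≤ y) : 1600 * Real.log y ≤ y := by
  have hlog : Real.log y = Real.log (y / 2 ^ 14) + 14 * Real.log 2 := by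
    rw [Real.log_div (by linarith) (by norm_num), Real.log_pow]
    norm_num
  have := Real.log_le_sub_one_of_pos (by positivity : 0 < y / 2 ^ 14)
  have := Real.log_two_lt_d9
  rw [hlog]
  norm_num at *
  linarith

lemma exists_dilation_parameters_of_mul_log_le {y L : ℝ} (hy : 50000 ≤ y) (hL : 43 ≤ L)
    (hLy : 400 * L ≤ y) {h : ℕ} (hh : h ≤ 0.722 * L) :
    ∃ Q w : ℕ, 5000 ≤ Q ∧ Q * (w + h) ≤ 7.1 * y * L ∧ 4 * (Q * (w + h)) * Q ^ 2 ≤ y ^ 4 ∧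
      1.56 * L * y ^ 2 < 0.145 * Q ^ 2 * w := by
  have hQ : (⌊4 * y⌋₊ : ℝ) ≤ 4 * y := Nat.floor_le (by positivity)
  have hQ' : 3.99 * y ≤ ⌊4 * y⌋₊ := by linarith [Nat.lt_floor_add_one (4 * y)]
  have hw : 0.7 * L ≤ ⌈0.7 * L⌉₊ := Nat.le_ceil _
  have hw' := Nat.ceil_lt_add_one (by positivity : 0 ≤ 0.7 * L)
  have hQw : (⌊4 * y⌋₊ : ℝ) * (⌈0.7 * L⌉₊ + h) ≤ 6.088 * (y * L) := by
    calc (⌊4 * y⌋₊ : ℝ) * (⌈0.7 * L⌉₊ + h) ≤ (4 * y) * (1.522 * L) := by gcongr; linarith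
      _ = 6.088 * (y * L) := by ring
  have hyL : 0 < y * L := by positivity
  refine ⟨⌊4 * y⌋₊, ⌈0.7 * L⌉₊, Nat.le_floor (by norm_num; linarith), by linarith, ?_, ?_⟩
  · calc 4 * ((⌊4 * y⌋₊ : ℝ) * (⌈0.7 * L⌉₊ + h)) * (⌊4 * y⌋₊ : ℝ) ^ 2
        ≤ 4 * (6.088 * (y * L)) * (4 * y) ^ 2 := by gcongr
      _ = y ^ 3 * (389.632 * L) := by ring
      _ ≤ y ^ 3 * y := by gcongr; linarith
      _ = y ^ 4 := by ring
  · calc 1.56 * L * y ^ 2 < 0.145 * (3.99 * y) ^ 2 * (0.7 * L) := by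
          have : 0 < L * y ^ 2 := by positivity
          linarith
      _ ≤ 0.145 * (⌊4 * y⌋₊ : ℝ) ^ 2 * ⌈0.7 * L⌉₊ := by gcongr

lemma exists_dilation_parameters {x : ℝ} (hx : 10 ^ 19 ≤ x) {h : ℕ}
    (hh : h ≤ 0.722 * Real.log x) :
    ∃ Q w : ℕ, 5000 ≤ Q ∧ Q * (w + h) ≤ 7.1 * x ^ ((1 : ℝ) / 4) * Real.log x ∧
      4 * (Q * (w + h)) * Q ^ 2 ≤ x ∧ 1.56 * Real.log x * √x < 0.145 * Q ^ 2 * w := by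
  have hx0 : 0 ≤ x := by linarith
  set y := x ^ ((1 : ℝ) / 4) with hy
  have hy0 : 0 ≤ y := Real.rpow_nonneg hx0 _
  have hyx : y ^ 4 = x := by
    rw [hy, one_div]
    exact_mod_cast Real.rpow_inv_natCast_pow hx0 four_ne_zero
  have hsqrt : √x = y ^ 2 := by
    rw [← hyx, Real.sqrt_eq_iff_mul_self_eq (by positivity) (by positivity)]
    ring
  have hlog : Real.log x = 4 * Real.log y := by rw [← hyx, Real.log_pow, Nat.cast_ofNat]
  have hy' : 50000 ≤ y :=
    le_of_pow_le_pow_left₀ four_ne_zero hy0 (le_trans (by norm_num) (hx.trans_eq hyx.symm))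
  have hlogy : 400 * Real.log x ≤ y := by linarith [mul_log_le_self hy']
  have := exists_dilation_parameters_of_mul_log_le hy' (forty_three_le_log hx) hlogy hh
  rwa [hyx, ← hsqrt] at this

end Numerics

theorem consecutive_constant_bound_general (p : ℕ) [Fact p.Prime] (hp : 10 ^ 19 ≤ p) {R : Type*}
    [CommMonoidWithZero R] (χ : DirichletCharacter R p) (hχ : χ ≠ 1) (N : ℤ) (H : ℕ)
    (hconst : ∀ i : ℕ, 1 ≤ i → i ≤ H → χ ((N + i : ℤ) : ZMod p) = χ ((N + 1 : ℤ) : ZMod p)) :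
    (H : ℝ) < 7.1 * (p : ℝ) ^ ((1 : ℝ) / 4) * Real.log p := by
  by_contra! hH
  have : Nontrivial R := not_subsingleton_iff_nontrivial.1 fun _ =>
    hχ (MulChar.ext fun a => Subsingleton.elim _ _)
  have hpR : (10 : ℝ) ^ 19 ≤ p := by exact_mod_cast hp
  obtain ⟨k, d, hkd, hd, hpow⟩ := exists_pow_eq_pow_of_mulChar_eq hχ
  obtain ⟨h, hh, hhlog, hcard⟩ := exists_card_powRunStarts_le hp (by simpa using hkd) hd
  obtain ⟨Q, w, hQ, hQH, hQp, hlt⟩ := exists_dilation_parameters hpR hhlog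
  have hQH : Q * (w + h) ≤ H := by exact_mod_cast hQH.trans hH
  have hH2 : 2 ≤ H := by
    calc 2 ≤ Q * 1 := by omega
      _ ≤ Q * (w + h) := by gcongr; omega
      _ ≤ H := hQH
  have hne := apply_ne_zero_of_forall_apply_eq hH2 hconst
  have hle := mul_sq_mul_le_card_powRunStarts hpow hconst hne hh hQ hQH (by exact_mod_cast hQp)
  exact (hlt.trans_le (hle.trans hcard)).false

theorem consecutive_constant_bound (p : ℕ) [Fact p.Prime] (hp : (10:ℕ)^19 ≤ p)
    (χ : DirichletCharacter ℂ p) (hχ : χ ≠ 1)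
    (N : ℤ) (H : ℕ) (hH : 0 < H)
    (hconst : ∀ i : ℕ, 1 ≤ i → i ≤ H → χ ((N + i : ℤ) : ZMod p) = χ ((N + 1 : ℤ) : ZMod p)) :
    (H : ℝ) < 7.1 * (p : ℝ) ^ ((1:ℝ)/4) * Real.log p :=
  consecutive_constant_bound_general p hp χ hχ N H hconst
end
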